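/- arXiv:1603.04462 — 5 statements merged into one kernel-verified Lean document; each statement's English description precedes it below -/
import Mathlib

section
/- For all γ > d > ε > 0 and all t₀ there exist T₀ and n₀ ∈ ℕ such that the following holds. If H is a 3-uniform hypergraph on n > n₀ vertices with δ₁(H) ≥ (7/16 + γ)·C(n,2), then there exists an (ε,t)-regular partition Q of H with t₀ < t < T₀ such that the cluster hypergraph K = K(ε,d,Q) has minimum vertex degree δ₁(K) ≥ (7/16 + γ − ε − d)·C(t,2). -/
open Finset

/-- The number of edges of `H` with exactly one vertex in each of `A₁`, `A₂`, `A₃`. -/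
def eCross {V : Type} [DecidableEq V] (H : Finset (Finset V)) (A1 A2 A3 : Finset V) : ℕ :=
  (H.filter (fun e => (e ∩ A1).card = 1 ∧ (e ∩ A2).card = 1 ∧ (e ∩ A3).card = 1)).card

/-- The density of `H` with respect to the triple `(A₁, A₂, A₃)`. -/
noncomputable def triDensity {V : Type} [DecidableEq V] (H : Finset (Finset V))
    (A1 A2 A3 : Finset V) : ℝ :=
  (eCross H A1 A2 A3 : ℝ) / ((A1.card : ℝ) * (A2.card : ℝ) * (A3.card : ℝ))

/-- The triple `(V₁, V₂, V₃)` is `(ε, d)`-regular in `H`. -/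
def RegTriple {V : Type} [DecidableEq V] (H : Finset (Finset V)) (ε d : ℝ)
    (V1 V2 V3 : Finset V) : Prop :=
  ∀ A1 A2 A3 : Finset V, A1 ⊆ V1 → A2 ⊆ V2 → A3 ⊆ V3 →
    ε * V1.card ≤ A1.card → ε * V2.card ≤ A2.card → ε * V3.card ≤ A3.card →
    |triDensity H A1 A2 A3 - d| ≤ ε

/-- The triple `(V₁, V₂, V₃)` is `ε`-regular in `H`. -/
def EpsRegTriple {V : Type} [DecidableEq V] (H : Finset (Finset V)) (ε : ℝ)
    (V1 V2 V3 : Finset V) : Prop :=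
  ∃ d : ℝ, 0 ≤ d ∧ RegTriple H ε d V1 V2 V3

/-- The triple of clusters `(V₁, V₂, V₃)` forms an edge of the cluster hypergraph
`K(ε, d, Q)`: it is `ε`-regular and has density at least `d`. -/
def ClusterEdge {V : Type} [DecidableEq V] (H : Finset (Finset V)) (ε d : ℝ)
    (V1 V2 V3 : Finset V) : Prop :=
  EpsRegTriple H ε V1 V2 V3 ∧ d ≤ triDensity H V1 V2 V3

section CondE

variable {Ω α β : Type} [Fintype Ω] [DecidableEq α] [DecidableEq β]

noncomputable def condE (φ : Ω → α) (F : Ω → ℝ) (w : Ω) : ℝ :=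
  (∑ x ∈ univ.filter (fun x => φ x = φ w), F x) / ((univ.filter (fun x => φ x = φ w)).card : ℝ)

lemma condE_congr (φ : Ω → α) (F : Ω → ℝ) {w w' : Ω} (h : φ w = φ w') :
    condE φ F w = condE φ F w' := by
  unfold condE; rw [h]

lemma sum_mul_condE (φ : Ω → α) (F u : Ω → ℝ) (hu : ∀ w w', φ w = φ w' → u w = u w') :
    ∑ w, u w * condE φ F w = ∑ w, u w * F w := by
  have h1 : ∀ w, u w * condE φ F w = ∑ x, if φ x = φ w then
      u x * F x / ((univ.filter (fun y => φ y = φ x)).card : ℝ) else 0 := by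
    intro w
    rw [← Finset.sum_filter]
    unfold condE
    rw [Finset.sum_div, Finset.mul_sum]
    apply Finset.sum_congr rfl
    intro x hx
    have hx' : φ x = φ w := (Finset.mem_filter.mp hx).2
    rw [hx', hu x w hx']; ring
  simp_rw [h1]
  rw [Finset.sum_comm]
  apply Finset.sum_congr rfl
  intro x _
  rw [← Finset.sum_filter, Finset.sum_const, nsmul_eq_mul]
  have h2 : (univ.filter (fun y => φ x = φ y)) = univ.filter (fun y => φ y = φ x) := by
    ext y; simp [eq_comm]
  rw [h2]
  have h3 : ((univ.filter (fun y => φ y = φ x)).card : ℝ) ≠ 0 := by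
    have : (univ.filter (fun y => φ y = φ x)).Nonempty := ⟨x, by simp⟩
    exact_mod_cast this.card_pos.ne'
  field_simp

lemma energy_pyth (φ : Ω → α) (ψ : Ω → β) (F : Ω → ℝ)
    (h : ∀ w w', ψ w = ψ w' → φ w = φ w') :
    ∑ w, (condE ψ F w)^2 = ∑ w, (condE φ F w)^2 + ∑ w, (condE ψ F w - condE φ F w)^2 := by
  have h1 := sum_mul_condE φ F (condE φ F) (fun w w' hw => condE_congr φ F hw)
  have h2 := sum_mul_condE ψ F (condE φ F) (fun w w' hw => condE_congr φ F (h w w' hw))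
  have h3 : ∑ w, (condE ψ F w - condE φ F w)^2 = ∑ w, (condE ψ F w)^2
      - 2 * ∑ w, condE φ F w * condE ψ F w + ∑ w, condE φ F w * condE φ F w := by
    rw [Finset.mul_sum, ← Finset.sum_sub_distrib, ← Finset.sum_add_distrib]
    exact Finset.sum_congr rfl (fun w _ => by ring)
  have h4 : ∑ w, (condE φ F w)^2 = ∑ w, condE φ F w * condE φ F w :=
    Finset.sum_congr rfl (fun w _ => by ring)
  rw [h3, h4]; linarith

lemma energy_le (φ : Ω → α) (F : Ω → ℝ) : ∑ w, (condE φ F w)^2 ≤ ∑ w, (F w)^2 := by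
  have h1 := sum_mul_condE φ F (condE φ F) (fun w w' hw => condE_congr φ F hw)
  have h3 : ∑ w, (F w - condE φ F w)^2 = ∑ w, (F w)^2
      - 2 * ∑ w, condE φ F w * F w + ∑ w, condE φ F w * condE φ F w := by
    rw [Finset.mul_sum, ← Finset.sum_sub_distrib, ← Finset.sum_add_distrib]
    exact Finset.sum_congr rfl (fun w _ => by ring)
  have h4 : ∑ w, (condE φ F w)^2 = ∑ w, condE φ F w * condE φ F w :=
    Finset.sum_congr rfl (fun w _ => by ring)
  have h5 : 0 ≤ ∑ w, (F w - condE φ F w)^2 := Finset.sum_nonneg (fun w _ => sq_nonneg _)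
  rw [h4]; linarith

end CondE

section Tri

variable {V : Type} [DecidableEq V]

def indF (H : Finset (Finset V)) (p : V × V × V) : ℝ :=
  if ({p.1, p.2.1, p.2.2} : Finset V) ∈ H then 1 else 0

/-- crossing edges as ordered triples -/
lemma eCross_eq (H : Finset (Finset V)) (hH : ∀ e ∈ H, e.card = 3) (A B C : Finset V)
    (hAB : Disjoint A B) (hAC : Disjoint A C) (hBC : Disjoint B C) :
    (eCross H A B C : ℝ) = ∑ p ∈ A ×ˢ B ×ˢ C, indF H p := by
  unfold indF
  rw [Finset.sum_boole]
  norm_cast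
  unfold eCross
  symm
  apply Finset.card_bij (fun p _ => ({p.1, p.2.1, p.2.2} : Finset V))
  · rintro ⟨x, y, z⟩ hp
    simp only [Finset.mem_filter, Finset.mem_product] at hp
    obtain ⟨⟨hx, hy, hz⟩, he⟩ := hp
    have e1 : ({x, y, z} : Finset V) ∩ A = {x} := by
      ext w; have := Finset.disjoint_left.mp hAB; have := Finset.disjoint_left.mp hAC
      simp only [mem_inter, mem_insert, mem_singleton]; grind
    have e2 : ({x, y, z} : Finset V) ∩ B = {y} := by
      ext w; have := Finset.disjoint_left.mp hAB; have := Finset.disjoint_left.mp hBC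
      simp only [mem_inter, mem_insert, mem_singleton]; grind
    have e3 : ({x, y, z} : Finset V) ∩ C = {z} := by
      ext w; have := Finset.disjoint_left.mp hAC; have := Finset.disjoint_left.mp hBC
      simp only [mem_inter, mem_insert, mem_singleton]; grind
    simp [e1, e2, e3, he]
  · rintro ⟨x, y, z⟩ hp ⟨x', y', z'⟩ hp' heq
    simp only [Finset.mem_filter, Finset.mem_product] at hp hp'
    obtain ⟨⟨hx, hy, hz⟩, -⟩ := hp
    obtain ⟨⟨hx', hy', hz'⟩, -⟩ := hp'
    have d1 := Finset.disjoint_left.mp hAB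
    have d2 := Finset.disjoint_left.mp hAC
    have d3 := Finset.disjoint_left.mp hBC
    simp only at heq
    have m1 : x ∈ ({x', y', z'} : Finset V) := by rw [← heq]; simp
    have m2 : y ∈ ({x', y', z'} : Finset V) := by rw [← heq]; simp
    have m3 : z ∈ ({x', y', z'} : Finset V) := by rw [← heq]; simp
    simp only [mem_insert, mem_singleton] at m1 m2 m3
    grind
  · intro e he
    simp only [Finset.mem_filter] at he
    obtain ⟨heH, h1, h2, h3⟩ := he
    obtain ⟨x, hx⟩ := Finset.card_eq_one.mp h1
    obtain ⟨y, hy⟩ := Finset.card_eq_one.mp h2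
    obtain ⟨z, hz⟩ := Finset.card_eq_one.mp h3
    have hx1 : x ∈ e ∩ A := by rw [hx]; simp
    have hy1 : y ∈ e ∩ B := by rw [hy]; simp
    have hz1 : z ∈ e ∩ C := by rw [hz]; simp
    rw [mem_inter] at hx1 hy1 hz1
    have d1 := Finset.disjoint_left.mp hAB
    have d2 := Finset.disjoint_left.mp hAC
    have d3 := Finset.disjoint_left.mp hBC
    have hsub : ({x, y, z} : Finset V) ⊆ e := by
      intro w; simp only [mem_insert, mem_singleton]; grind
    have hc : ({x, y, z} : Finset V).card = 3 := by
      rw [Finset.card_eq_three]; exact ⟨x, y, z, by grind, by grind, by grind, rfl⟩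
    have heq : ({x, y, z} : Finset V) = e :=
      Finset.eq_of_subset_of_card_le hsub (by rw [hc, hH e heH])
    refine ⟨(x, y, z), ?_, heq⟩
    simp only [Finset.mem_filter, Finset.mem_product]
    exact ⟨⟨hx1.2, hy1.2, hz1.2⟩, by rw [heq]; exact heH⟩

lemma eCross_swap (H : Finset (Finset V)) (A B C : Finset V) :
    eCross H A B C = eCross H A C B := by
  unfold eCross
  congr 1
  ext e
  simp only [Finset.mem_filter]
  tauto

lemma triDensity_swap (H : Finset (Finset V)) (A B C : Finset V) :
    triDensity H A B C = triDensity H A C B := by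
  unfold triDensity
  rw [eCross_swap]; congr 1; ring

lemma clusterEdge_swap (H : Finset (Finset V)) (ε d : ℝ) (A B C : Finset V)
    (h : ClusterEdge H ε d A B C) : ClusterEdge H ε d A C B := by
  obtain ⟨⟨d', hd', hr⟩, hd⟩ := h
  refine ⟨⟨d', hd', ?_⟩, by rw [triDensity_swap]; exact hd⟩
  intro A1 A2 A3 h1 h2 h3 c1 c2 c3
  rw [triDensity_swap]
  exact hr A1 A3 A2 h1 h3 h2 c1 c3 c2

lemma epsReg_mono (H : Finset (Finset V)) {ε ε' : ℝ} (h : ε' ≤ ε) (A B C : Finset V)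
    (hr : EpsRegTriple H ε' A B C) : EpsRegTriple H ε A B C := by
  obtain ⟨d', hd', hr⟩ := hr
  refine ⟨d', hd', ?_⟩
  intro A1 A2 A3 h1 h2 h3 c1 c2 c3
  refine (hr A1 A2 A3 h1 h2 h3 ?_ ?_ ?_).trans h
  · exact (mul_le_mul_of_nonneg_right h (Nat.cast_nonneg _)).trans c1
  · exact (mul_le_mul_of_nonneg_right h (Nat.cast_nonneg _)).trans c2
  · exact (mul_le_mul_of_nonneg_right h (Nat.cast_nonneg _)).trans c3

lemma triDensity_nonneg (H : Finset (Finset V)) (A B C : Finset V) :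
    0 ≤ triDensity H A B C := by unfold triDensity; positivity

lemma not_reg (H : Finset (Finset V)) (ε : ℝ) (A B C : Finset V)
    (h : ¬ EpsRegTriple H ε A B C) :
    ∃ A1 A2 A3 : Finset V, A1 ⊆ A ∧ A2 ⊆ B ∧ A3 ⊆ C ∧
      ε * A.card ≤ A1.card ∧ ε * B.card ≤ A2.card ∧ ε * C.card ≤ A3.card ∧
      ε < |triDensity H A1 A2 A3 - triDensity H A B C| := by
  by_contra hcon
  apply h
  refine ⟨triDensity H A B C, triDensity_nonneg _ _ _ _, ?_⟩
  intro A1 A2 A3 h1 h2 h3 c1 c2 c3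
  by_contra hlt
  exact hcon ⟨A1, A2, A3, h1, h2, h3, c1, c2, c3, not_le.mp hlt⟩

end Tri
section Chop

variable {V : Type} [Fintype V] [DecidableEq V]

lemma chop (W : Finset (Finset V)) (U : Finset V) (m : ℕ) (hm : 0 < m) :
    ∃ P : Finset (Finset V),
      (∀ A ∈ P, A.card = m ∧ A ⊆ U ∧ ∀ w ∈ W, ∀ x ∈ A, ∀ y ∈ A, x ∈ w → y ∈ w) ∧
      (∀ A ∈ P, ∀ B ∈ P, A ≠ B → Disjoint A B) ∧
      (U \ P.biUnion id).card ≤ 2 ^ W.card * m := by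
  classical
  obtain ⟨P, hP, hmax⟩ := Finset.exists_max_image
    ((univ : Finset (Finset (Finset V))).filter (fun P =>
      (∀ A ∈ P, A.card = m ∧ A ⊆ U ∧ ∀ w ∈ W, ∀ x ∈ A, ∀ y ∈ A, x ∈ w → y ∈ w) ∧
      (∀ A ∈ P, ∀ B ∈ P, A ≠ B → Disjoint A B))) (fun P => P.card) ⟨∅, by simp⟩
  simp only [Finset.mem_filter, Finset.mem_univ, true_and] at hP hmax
  refine ⟨P, hP.1, hP.2, ?_⟩
  have key : ∀ w ∈ W.powerset,
      ((U \ P.biUnion id).filter (fun v => W.filter (fun s => v ∈ s) = w)).card ≤ m := by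
    intro w _
    by_contra hlt
    obtain ⟨S, hS, hSc⟩ := Finset.exists_subset_card_eq (not_le.mp hlt).le
    have hSne : S.Nonempty := by rw [← Finset.card_pos]; omega
    have hdis : ∀ B ∈ P, Disjoint S B := by
      intro B hB
      rw [Finset.disjoint_left]
      intro x hx hxB
      have := hS hx
      simp only [Finset.mem_filter, Finset.mem_sdiff, Finset.mem_biUnion] at this
      exact this.1.2 ⟨B, hB, hxB⟩
    have hSP : S ∉ P := by
      intro h
      have := hdis S h
      rw [disjoint_self] at this
      exact hSne.ne_empty this
    have := hmax (insert S P) ⟨?_, ?_⟩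
    · rw [Finset.card_insert_of_notMem hSP] at this; omega
    · intro A hA
      rw [Finset.mem_insert] at hA
      rcases hA with rfl | hA
      · refine ⟨hSc, ?_, ?_⟩
        · intro x hx
          have := hS hx
          simp only [Finset.mem_filter, Finset.mem_sdiff] at this
          exact this.1.1
        · intro s hs x hx y hy hxs
          have h1 := (Finset.mem_filter.mp (hS hx)).2
          have h2 := (Finset.mem_filter.mp (hS hy)).2
          have : s ∈ W.filter (fun s => y ∈ s) := by
            rw [h2, ← h1]; simp [hs, hxs]
          exact (Finset.mem_filter.mp this).2
      · exact hP.1 A hA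
    · intro A hA B hB hne
      rw [Finset.mem_insert] at hA hB
      rcases hA with rfl | hA <;> rcases hB with rfl | hB
      · exact absurd rfl hne
      · exact hdis B hB
      · exact (hdis A hA).symm
      · exact hP.2 A hA B hB hne
  have := Finset.card_le_mul_card_image_of_maps_to
    (s := U \ P.biUnion id) (t := W.powerset) (f := fun v => W.filter (fun s => v ∈ s))
    (fun v _ => by simp) m key
  rw [Finset.card_powerset] at this
  linarith [mul_comm m (2 ^ W.card)]

open Classical in
noncomputable def lab (P : Finset (Finset V)) (v : V) : Finset V :=
  if h : ∃ A ∈ P, v ∈ A then h.choose else {v}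

lemma lab_spec (P : Finset (Finset V)) (v : V) :
    v ∈ lab P v ∧ (lab P v ∈ P ∨ lab P v = {v}) := by
  unfold lab
  split_ifs with h
  · exact ⟨h.choose_spec.2, Or.inl h.choose_spec.1⟩
  · simp

lemma lab_eq {P : Finset (Finset V)} (hP : ∀ A ∈ P, ∀ B ∈ P, A ≠ B → Disjoint A B)
    {v : V} {A : Finset V} (hA : A ∈ P) (hv : v ∈ A) : lab P v = A := by
  unfold lab
  have h : ∃ A ∈ P, v ∈ A := ⟨A, hA, hv⟩
  rw [dif_pos h]
  by_contra hne
  exact Finset.disjoint_left.mp (hP _ h.choose_spec.1 A hA hne) h.choose_spec.2 hv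

lemma lab_eq_iff {P : Finset (Finset V)} (hP : ∀ A ∈ P, ∀ B ∈ P, A ≠ B → Disjoint A B)
    {v : V} {A : Finset V} (hA : A ∈ P) : lab P v = A ↔ v ∈ A := by
  constructor
  · intro h; rw [← h]; exact (lab_spec P v).1
  · exact lab_eq hP hA

lemma lab_cases (P : Finset (Finset V)) {x y : V} (h : lab P x = lab P y) :
    x = y ∨ ∃ A ∈ P, x ∈ A ∧ y ∈ A := by
  rcases (lab_spec P x).2 with h1 | h1
  · exact Or.inr ⟨_, h1, (lab_spec P x).1, by rw [h]; exact (lab_spec P y).1⟩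
  · left
    have := (lab_spec P y).1
    rw [← h, h1] at this
    exact (Finset.mem_singleton.mp this).symm

noncomputable def lab3 (P : Finset (Finset V)) (p : V × V × V) :
    Finset V × Finset V × Finset V := (lab P p.1, lab P p.2.1, lab P p.2.2)

noncomputable def energy (H P : Finset (Finset V)) : ℝ :=
  ∑ p, (condE (lab3 P) (indF H) p)^2

lemma energy_nonneg (H P : Finset (Finset V)) : 0 ≤ energy H P :=
  Finset.sum_nonneg (fun _ _ => sq_nonneg _)

lemma energy_le_card (H P : Finset (Finset V)) : energy H P ≤ (Fintype.card V : ℝ)^3 := by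
  refine (energy_le _ _).trans ?_
  calc ∑ w, (indF H w)^2 ≤ ∑ w : V × V × V, (1:ℝ) := by
        apply Finset.sum_le_sum
        intro w _
        unfold indF
        split_ifs <;> norm_num
    _ = (Fintype.card V : ℝ)^3 := by
        simp [Fintype.card_prod]; ring

open Classical in
noncomputable def badT (H : Finset (Finset V)) (ε : ℝ) (P : Finset (Finset V)) :
    Finset (Finset V × Finset V × Finset V) :=
  (P ×ˢ P ×ˢ P).filter (fun p => p.1 ≠ p.2.1 ∧ p.1 ≠ p.2.2 ∧ p.2.1 ≠ p.2.2 ∧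
    ¬ EpsRegTriple H ε p.1 p.2.1 p.2.2)

lemma mem_badT {H : Finset (Finset V)} {ε : ℝ} {P : Finset (Finset V)}
    {p : Finset V × Finset V × Finset V} : p ∈ badT H ε P ↔
    (p.1 ∈ P ∧ p.2.1 ∈ P ∧ p.2.2 ∈ P) ∧ p.1 ≠ p.2.1 ∧ p.1 ≠ p.2.2 ∧ p.2.1 ≠ p.2.2 ∧
    ¬ EpsRegTriple H ε p.1 p.2.1 p.2.2 := by
  unfold badT
  simp [Finset.mem_filter, Finset.mem_product]

lemma condE_lab3 (H : Finset (Finset V)) (hH : ∀ e ∈ H, e.card = 3) {P : Finset (Finset V)}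
    (hP : ∀ A ∈ P, ∀ B ∈ P, A ≠ B → Disjoint A B) {A B C : Finset V}
    (hA : A ∈ P) (hB : B ∈ P) (hC : C ∈ P) (hAB : A ≠ B) (hAC : A ≠ C) (hBC : B ≠ C)
    {p : V × V × V} (hp : p ∈ A ×ˢ B ×ˢ C) :
    condE (lab3 P) (indF H) p = triDensity H A B C := by
  simp only [Finset.mem_product] at hp
  have h1 : (univ.filter (fun x => lab3 P x = lab3 P p)) = A ×ˢ B ×ˢ C := by
    ext x
    simp only [Finset.mem_filter, Finset.mem_univ, true_and, Finset.mem_product, lab3,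
      Prod.mk.injEq, lab_eq hP hA hp.1, lab_eq hP hB hp.2.1, lab_eq hP hC hp.2.2,
      lab_eq_iff hP hA, lab_eq_iff hP hB, lab_eq_iff hP hC]
  unfold condE triDensity
  rw [h1, eCross_eq H hH A B C (hP _ hA _ hB hAB) (hP _ hA _ hC hAC) (hP _ hB _ hC hBC)]
  congr 1
  simp only [Finset.card_product]
  push_cast; ring

lemma incr (H : Finset (Finset V)) (hH : ∀ e ∈ H, e.card = 3) {ε : ℝ} (hε : 0 < ε)
    (P : Finset (Finset V)) (m : ℕ) (hm : 0 < m) (hPm : ∀ A ∈ P, A.card = m)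
    (hP : ∀ A ∈ P, ∀ B ∈ P, A ≠ B → Disjoint A B)
    (W1 W2 W3 : Finset V × Finset V × Finset V → Finset V)
    (hW : ∀ p ∈ badT H ε P, W1 p ⊆ p.1 ∧ W2 p ⊆ p.2.1 ∧ W3 p ⊆ p.2.2 ∧
      ε * p.1.card ≤ (W1 p).card ∧ ε * p.2.1.card ≤ (W2 p).card ∧
      ε * p.2.2.card ≤ (W3 p).card ∧
      ε < |triDensity H (W1 p) (W2 p) (W3 p) - triDensity H p.1 p.2.1 p.2.2|)
    (P' : Finset (Finset V))
    (hPP' : ∀ A' ∈ P', ∃ A ∈ P, A' ⊆ A)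
    (hr1 : ∀ p ∈ badT H ε P, ∀ A ∈ P', ∀ x ∈ A, ∀ y ∈ A, x ∈ W1 p → y ∈ W1 p)
    (hr2 : ∀ p ∈ badT H ε P, ∀ A ∈ P', ∀ x ∈ A, ∀ y ∈ A, x ∈ W2 p → y ∈ W2 p)
    (hr3 : ∀ p ∈ badT H ε P, ∀ A ∈ P', ∀ x ∈ A, ∀ y ∈ A, x ∈ W3 p → y ∈ W3 p) :
    energy H P + (badT H ε P).card * (ε^5 * (m:ℝ)^3) ≤ energy H P' := by
  have href1 : ∀ x y, lab P' x = lab P' y → lab P x = lab P y := by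
    intro x y h
    rcases lab_cases P' h with rfl | ⟨A', hA', hx, hy⟩
    · rfl
    · obtain ⟨A, hA, hsub⟩ := hPP' A' hA'
      rw [lab_eq hP hA (hsub hx), lab_eq hP hA (hsub hy)]
  have href : ∀ w w', lab3 P' w = lab3 P' w' → lab3 P w = lab3 P w' := by
    intro w w' h
    simp only [lab3, Prod.mk.injEq] at h ⊢
    exact ⟨href1 _ _ h.1, href1 _ _ h.2.1, href1 _ _ h.2.2⟩
  have hpy := energy_pyth (lab3 P) (lab3 P') (indF H) href
  unfold energy
  rw [hpy]
  set g : V × V × V → ℝ := fun w => condE (lab3 P') (indF H) w - condE (lab3 P) (indF H) w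
    with hg
  have hmain : ∀ p ∈ badT H ε P, ε^5 * (m:ℝ)^3 ≤ ∑ w ∈ p.1 ×ˢ p.2.1 ×ˢ p.2.2, (g w)^2 := by
    rintro ⟨A, B, C⟩ hp
    obtain ⟨s1, s2, s3, c1, c2, c3, hdev⟩ := hW _ hp
    have q1 := hr1 _ hp
    have q2 := hr2 _ hp
    have q3 := hr3 _ hp
    set A1 := W1 (A, B, C)
    set A2 := W2 (A, B, C)
    set A3 := W3 (A, B, C)
    obtain ⟨⟨hA, hB, hC⟩, hAB, hAC, hBC, -⟩ := mem_badT.mp hp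
    simp only at s1 s2 s3 c1 c2 c3 hdev hA hB hC hAB hAC hBC ⊢
    rw [hPm A hA] at c1
    rw [hPm B hB] at c2
    rw [hPm C hC] at c3
    have hm' : (0:ℝ) < m := by exact_mod_cast hm
    have hem : 0 < ε * m := by positivity
    have a1 : (0:ℝ) < A1.card := lt_of_lt_of_le hem c1
    have a2 : (0:ℝ) < A2.card := lt_of_lt_of_le hem c2
    have a3 : (0:ℝ) < A3.card := lt_of_lt_of_le hem c3
    have hsub : A1 ×ˢ A2 ×ˢ A3 ⊆ A ×ˢ B ×ˢ C :=
      Finset.product_subset_product s1 (Finset.product_subset_product s2 s3)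
    set N : ℝ := (A1.card : ℝ) * A2.card * A3.card with hN
    have hNpos : 0 < N := by positivity
    have hcard : ((A1 ×ˢ A2 ×ˢ A3).card : ℝ) = N := by
      simp only [Finset.card_product, hN]; push_cast; ring
    -- sum of condE P'
    have hE' : ∑ w ∈ A1 ×ˢ A2 ×ˢ A3, condE (lab3 P') (indF H) w = triDensity H A1 A2 A3 * N := by
      have hu := sum_mul_condE (lab3 P') (indF H)
        (fun w => if w ∈ A1 ×ˢ A2 ×ˢ A3 then 1 else 0) ?_
      · simp only [ite_mul, one_mul, zero_mul, Finset.sum_ite_mem, Finset.univ_inter] at hu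
        rw [hu, ← eCross_eq H hH A1 A2 A3
          ((hP _ hA _ hB hAB).mono s1 s2) ((hP _ hA _ hC hAC).mono s1 s3)
          ((hP _ hB _ hC hBC).mono s2 s3)]
        unfold triDensity
        rw [← hN]
        field_simp
      · have aux : ∀ S : Finset V, (∀ A ∈ P', ∀ x ∈ A, ∀ y ∈ A, x ∈ S → y ∈ S) →
            ∀ x y, lab P' x = lab P' y → (x ∈ S ↔ y ∈ S) := by
          intro S hS x y h
          rcases lab_cases P' h with rfl | ⟨A', hA', hx, hy⟩
          · rfl
          · exact ⟨hS A' hA' x hx y hy, hS A' hA' y hy x hx⟩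
        intro w w' h
        simp only [lab3, Prod.mk.injEq] at h
        simp only [Finset.mem_product, aux A1 q1 _ _ h.1, aux A2 q2 _ _ h.2.1,
          aux A3 q3 _ _ h.2.2]
    have hE : ∑ w ∈ A1 ×ˢ A2 ×ˢ A3, condE (lab3 P) (indF H) w = triDensity H A B C * N := by
      rw [Finset.sum_congr rfl (fun w hw => condE_lab3 H hH hP hA hB hC hAB hAC hBC (hsub hw)),
        Finset.sum_const, nsmul_eq_mul, hcard, mul_comm]
    have hgs : ∑ w ∈ A1 ×ˢ A2 ×ˢ A3, g w = (triDensity H A1 A2 A3 - triDensity H A B C) * N := by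
      simp only [hg, Finset.sum_sub_distrib, hE, hE']; ring
    have hcs := sq_sum_le_card_mul_sum_sq (s := A1 ×ˢ A2 ×ˢ A3) (f := g)
    rw [hgs, hcard] at hcs
    have hsq : ε^2 ≤ (triDensity H A1 A2 A3 - triDensity H A B C)^2 := by
      rw [← sq_abs (triDensity H A1 A2 A3 - triDensity H A B C)]
      exact pow_le_pow_left₀ hε.le hdev.le 2
    have h5 : ε^2 * N ≤ ∑ w ∈ A1 ×ˢ A2 ×ˢ A3, (g w)^2 := by
      have : N * (ε^2 * N) ≤ N * ∑ w ∈ A1 ×ˢ A2 ×ˢ A3, (g w)^2 := by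
        refine le_trans ?_ hcs
        nlinarith [mul_le_mul_of_nonneg_right hsq (sq_nonneg N)]
      exact le_of_mul_le_mul_left this hNpos
    have h6 : (ε * m) * (ε * m) * (ε * m) ≤ N := by
      rw [hN]
      gcongr
    calc ε^5 * (m:ℝ)^3 = ε^2 * ((ε * m) * (ε * m) * (ε * m)) := by ring
      _ ≤ ε^2 * N := by gcongr
      _ ≤ _ := h5
      _ ≤ _ := Finset.sum_le_sum_of_subset_of_nonneg hsub (fun _ _ _ => sq_nonneg _)
  have hdisj : ((badT H ε P : Finset _) : Set (Finset V × Finset V × Finset V)).PairwiseDisjoint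
      (fun p => p.1 ×ˢ p.2.1 ×ˢ p.2.2) := by
    rintro ⟨A, B, C⟩ hp ⟨A', B', C'⟩ hp' hne
    obtain ⟨⟨hA, hB, hC⟩, -⟩ := mem_badT.mp hp
    obtain ⟨⟨hA', hB', hC'⟩, -⟩ := mem_badT.mp hp'
    simp only at hA hB hC hA' hB' hC'
    simp only [Function.onFun]
    rw [Finset.disjoint_left]
    rintro ⟨x, y, z⟩ h1 h2
    simp only [Finset.mem_product] at h1 h2
    apply hne
    rw [← lab_eq hP hA h1.1, ← lab_eq hP hB h1.2.1, ← lab_eq hP hC h1.2.2,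
      lab_eq hP hA' h2.1, lab_eq hP hB' h2.2.1, lab_eq hP hC' h2.2.2]
  have hsum : ((badT H ε P).card : ℝ) * (ε^5 * (m:ℝ)^3) ≤ ∑ w, (g w)^2 := by
    rw [← nsmul_eq_mul]
    refine (Finset.card_nsmul_le_sum _ _ _ hmain).trans ?_
    rw [← Finset.sum_biUnion hdisj]
    exact Finset.sum_le_sum_of_subset_of_nonneg (Finset.subset_univ _) (fun _ _ _ => sq_nonneg _)
  linarith

end Chop
section Reg

def IsFam {V : Type} (P : Finset (Finset V)) (m : ℕ) : Prop :=
  0 < m ∧ (∀ A ∈ P, A.card = m) ∧ (∀ A ∈ P, ∀ B ∈ P, A ≠ B → Disjoint A B)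

lemma IsFam.card_biUnion {V : Type} [DecidableEq V] {P : Finset (Finset V)} {m : ℕ}
    (h : IsFam P m) : (P.biUnion id).card = P.card * m := by
  rw [Finset.card_biUnion (t := id) (fun A hA B hB hne => h.2.2 A hA B hB hne),
    Finset.sum_congr rfl (fun A hA => (h.2.1 A hA : (id A).card = m)), Finset.sum_const, smul_eq_mul]

lemma IsFam.card_add {V : Type} [Fintype V] [DecidableEq V] {P : Finset (Finset V)} {m : ℕ}
    (h : IsFam P m) :
    (P.card : ℝ) * m + ((univ \ P.biUnion id).card : ℝ) = Fintype.card V := by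
  have h1 := Finset.card_sdiff_add_card_eq_card (Finset.subset_univ (P.biUnion id))
  rw [h.card_biUnion, Finset.card_univ] at h1
  rw [← h1]; push_cast; ring

lemma chop_param (η : ℝ) (hη : 0 < η) (t1 : ℕ) (ht1 : η * (2 * t1) ≤ 1) (L : ℕ) :
    ∃ T N : ℕ, 0 < N ∧ ∀ (V : Type) [Fintype V] [DecidableEq V], N ≤ Fintype.card V →
      ∀ (W : Finset (Finset V)) (U : Finset V), W.card ≤ L →
      ((univ \ U).card : ℝ) + η * Fintype.card V ≤ Fintype.card V / 2 →
      ∃ (P : Finset (Finset V)) (m : ℕ), IsFam P m ∧ t1 ≤ P.card ∧ P.card ≤ T ∧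
        (∀ A ∈ P, A ⊆ U ∧ ∀ w ∈ W, ∀ x ∈ A, ∀ y ∈ A, x ∈ w → y ∈ w) ∧
        ((univ \ P.biUnion id).card : ℝ) ≤ ((univ \ U).card : ℝ) + η * Fintype.card V := by
  set s : ℝ := 2 ^ L with hs
  have hs1 : 1 ≤ s := one_le_pow₀ (by norm_num)
  refine ⟨⌈2 * s / η⌉₊, ⌈s / η⌉₊ + 1, by omega, ?_⟩
  intro V _ _ hn W U hW hU
  set n := Fintype.card V with hnd
  have hnR : s / η + 1 ≤ (n : ℝ) := by
    have h1 := Nat.le_ceil (s / η)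
    have h2 : ((⌈s / η⌉₊ + 1 : ℕ) : ℝ) ≤ n := by exact_mod_cast hn
    push_cast at h2; linarith
  have hn0 : (0:ℝ) < n := by have : 0 < s / η := by positivity
                             linarith
  have hq : 1 ≤ η * n / s := by
    rw [le_div_iff₀ (by linarith)]
    have : s / η ≤ n := by linarith
    rw [div_le_iff₀ hη] at this
    linarith
  set m := ⌊η * n / s⌋₊ with hm
  have hm1 : 1 ≤ m := by rw [hm]; exact (Nat.one_le_floor_iff _).mpr hq
  have hmle : (m : ℝ) ≤ η * n / s := Nat.floor_le (by linarith)
  have hmge : η * n / s < m + 1 := Nat.lt_floor_add_one _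
  have hm1R : (1:ℝ) ≤ m := by exact_mod_cast hm1
  have hms : m * s ≤ η * n := by rwa [le_div_iff₀ (by linarith)] at hmle
  have hmge2 : η * n ≤ 2 * m * s := by
    rw [div_lt_iff₀ (by linarith)] at hmge
    nlinarith
  obtain ⟨P, h1, h2, h3⟩ := chop W U m (by omega)
  have hfam : IsFam P m := ⟨by omega, fun A hA => (h1 A hA).1, h2⟩
  have hunc : ((univ \ P.biUnion id).card : ℝ) ≤ ((univ \ U).card : ℝ) + η * n := by
    have e1 : (univ \ P.biUnion id) ⊆ (univ \ U) ∪ (U \ P.biUnion id) := by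
      intro x; simp only [Finset.mem_sdiff, Finset.mem_union, Finset.mem_univ, true_and]; tauto
    have e2 := (Finset.card_le_card e1).trans (Finset.card_union_le _ _)
    have e3 : ((U \ P.biUnion id).card : ℝ) ≤ 2 ^ W.card * m := by exact_mod_cast h3
    have e4 : (2:ℝ) ^ W.card ≤ s := pow_le_pow_right₀ (by norm_num) hW
    have e5 : ((univ \ P.biUnion id).card : ℝ) ≤ (univ \ U).card + (U \ P.biUnion id).card := by
      exact_mod_cast e2
    nlinarith
  have hadd := hfam.card_add
  rw [← hnd] at hadd
  refine ⟨P, m, hfam, ?_, ?_, fun A hA => (h1 A hA).2, hunc⟩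
  · by_contra hlt
    have hlt' : (P.card : ℝ) + 1 ≤ t1 := by exact_mod_cast (not_le.mp hlt)
    have k1 : (n:ℝ) / 2 ≤ P.card * m := by linarith
    have k2 : (m:ℝ) ≤ η * n := by nlinarith
    have k3 : (P.card : ℝ) * m ≤ P.card * (η * n) := by gcongr
    have k4 : (P.card : ℝ) * (η * n) < t1 * (η * n) := by
      apply mul_lt_mul_of_pos_right _ (by positivity); linarith
    nlinarith
  · have k1 : (P.card : ℝ) * m ≤ n := by
      have : (0:ℝ) ≤ ((univ \ P.biUnion id).card : ℝ) := Nat.cast_nonneg _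
      linarith
    have k2 : (P.card : ℝ) ≤ 2 * s / η := by
      rw [le_div_iff₀ hη]
      have : (P.card * η) * n ≤ (2 * s) * n := by
        have := mul_le_mul_of_nonneg_left hmge2 (Nat.cast_nonneg (α := ℝ) P.card)
        nlinarith
      exact le_of_mul_le_mul_right this hn0
    exact_mod_cast k2.trans (Nat.le_ceil _)

def GoodReg (ε : ℝ) (t1 T : ℕ) {V : Type} [Fintype V] [DecidableEq V]
    (H : Finset (Finset V)) : Prop :=
  ∃ (P : Finset (Finset V)) (m : ℕ), IsFam P m ∧ t1 ≤ P.card ∧ P.card ≤ T ∧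
    ((univ \ P.biUnion id).card : ℝ) ≤ ε * Fintype.card V ∧
    ((badT H ε P).card : ℝ) ≤ ε * (P.card : ℝ)^3

lemma wreg (ε : ℝ) (hε : 0 < ε) (hε2 : ε ≤ 1/2) (t1 : ℕ) :
    ∃ T N : ℕ, ∀ (V : Type) [Fintype V] [DecidableEq V], N ≤ Fintype.card V →
      ∀ (H : Finset (Finset V)), (∀ e ∈ H, e.card = 3) → GoodReg ε t1 T H := by
  set c : ℝ := ε^6 / 8 with hc
  have hc0 : 0 < c := by positivity
  obtain ⟨K, hK⟩ := exists_nat_gt (1 / c)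
  have hKc : 1 < K * c := by rwa [div_lt_iff₀ hc0] at hK
  obtain ⟨η, hη, hη1, hη2⟩ : ∃ η : ℝ, 0 < η ∧ η * (2 * t1) ≤ 1 ∧ (K + 2) * η ≤ ε := by
    refine ⟨min (ε / (K + 2)) (1 / (2 * t1 + 1)), by positivity, ?_, ?_⟩
    · have h1 : min (ε / (K + 2)) (1 / (2 * t1 + 1)) ≤ 1 / (2 * (t1:ℝ) + 1) := min_le_right _ _
      have h2 : min (ε / (K + 2)) (1 / (2 * t1 + 1)) * (2 * (t1:ℝ))
        ≤ 1 / (2 * (t1:ℝ) + 1) * (2 * t1) := by gcongr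
      refine h2.trans ?_
      rw [div_mul_eq_mul_div, div_le_one (by positivity)]; linarith
    · have h1 : min (ε / (K + 2)) (1 / (2 * (t1:ℝ) + 1)) ≤ ε / (K + 2) := min_le_left _ _
      rw [le_div_iff₀ (by positivity)] at h1
      linarith
  have claim : ∀ k : ℕ, k ≤ K → ∃ T N : ℕ, 0 < N ∧
      ∀ (V : Type) [Fintype V] [DecidableEq V], N ≤ Fintype.card V →
      ∀ (H : Finset (Finset V)), (∀ e ∈ H, e.card = 3) → GoodReg ε t1 T H ∨
      ∃ (P : Finset (Finset V)) (m : ℕ), IsFam P m ∧ t1 ≤ P.card ∧ P.card ≤ T ∧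
        ((univ \ P.biUnion id).card : ℝ) ≤ (k + 1) * η * Fintype.card V ∧
        k * c * (Fintype.card V : ℝ)^3 ≤ energy H P := by
    intro k
    induction k with
    | zero =>
      intro _
      obtain ⟨T, N, hN, h⟩ := chop_param η hη t1 hη1 0
      refine ⟨T, N, hN, ?_⟩
      intro V _ _ hn H hH
      right
      have hηh : η ≤ 1/2 := by
        have : (0:ℝ) ≤ K := Nat.cast_nonneg _
        nlinarith
      have hnn : (0:ℝ) ≤ Fintype.card V := Nat.cast_nonneg _
      obtain ⟨P, m, hf, h1, h2, -, h3⟩ := h V hn ∅ univ (by simp) (by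
        simp only [Finset.sdiff_self, Finset.card_empty]; push_cast; nlinarith)
      refine ⟨P, m, hf, h1, h2, ?_, ?_⟩
      · simpa using h3
      · simpa using energy_nonneg H P
    | succ k ih =>
      intro hk
      obtain ⟨T, N, hN, hT⟩ := ih (by omega)
      obtain ⟨T', N', hN', hT'⟩ := chop_param η hη t1 hη1 (T + 3 * T^3)
      refine ⟨max T T', max N N', by omega, ?_⟩
      intro V _ _ hn H hH
      set n := Fintype.card V with hnd
      have hn0 : (0:ℝ) < n := by
        have : 0 < n := by omega
        exact_mod_cast this
      rcases hT V (le_trans (le_max_left _ _) hn) H hH with hgood | ⟨P, m, hf, h1, h2, h3, h4⟩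
      · left
        obtain ⟨P, m, hf, h1, h2, h3⟩ := hgood
        exact ⟨P, m, hf, h1, h2.trans (le_max_left _ _), h3⟩
      have hkK : (k:ℝ) + 1 ≤ K := by exact_mod_cast hk
      have hle1 : ((k:ℝ) + 2) * η ≤ ε := by nlinarith
      by_cases hb : ((badT H ε P).card : ℝ) ≤ ε * (P.card : ℝ)^3
      · left
        refine ⟨P, m, hf, h1, h2.trans (le_max_left _ _), h3.trans ?_, hb⟩
        gcongr
        nlinarith
      right
      have hwit : ∀ p : Finset V × Finset V × Finset V, ∃ A1 A2 A3 : Finset V, p ∈ badT H ε P →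
          A1 ⊆ p.1 ∧ A2 ⊆ p.2.1 ∧ A3 ⊆ p.2.2 ∧
          ε * p.1.card ≤ A1.card ∧ ε * p.2.1.card ≤ A2.card ∧ ε * p.2.2.card ≤ A3.card ∧
          ε < |triDensity H A1 A2 A3 - triDensity H p.1 p.2.1 p.2.2| := by
        intro p
        by_cases hp : p ∈ badT H ε P
        · obtain ⟨A1, A2, A3, h⟩ := not_reg H ε p.1 p.2.1 p.2.2 (mem_badT.mp hp).2.2.2.2
          exact ⟨A1, A2, A3, fun _ => h⟩
        · exact ⟨∅, ∅, ∅, fun h => absurd h hp⟩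
      choose W1 W2 W3 hW using hwit
      set W : Finset (Finset V) := P ∪ ((badT H ε P).image W1 ∪ ((badT H ε P).image W2 ∪
        (badT H ε P).image W3)) with hWd
      have hbadc : (badT H ε P).card ≤ T^3 := by
        have : badT H ε P ⊆ P ×ˢ P ×ˢ P := by
          intro p hp
          simp only [Finset.mem_product]
          exact (mem_badT.mp hp).1
        refine (Finset.card_le_card this).trans ?_
        simp only [Finset.card_product]
        calc P.card * (P.card * P.card) = P.card^3 := by ring
          _ ≤ T^3 := Nat.pow_le_pow_left h2 3
      have hWc : W.card ≤ T + 3 * T^3 := by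
        have e1 := Finset.card_union_le P ((badT H ε P).image W1 ∪ ((badT H ε P).image W2 ∪
          (badT H ε P).image W3))
        have e2 := Finset.card_union_le ((badT H ε P).image W1) ((badT H ε P).image W2 ∪
          (badT H ε P).image W3)
        have e3 := Finset.card_union_le ((badT H ε P).image W2) ((badT H ε P).image W3)
        have f1 := Finset.card_image_le (s := badT H ε P) (f := W1)
        have f2 := Finset.card_image_le (s := badT H ε P) (f := W2)
        have f3 := Finset.card_image_le (s := badT H ε P) (f := W3)
        rw [← hWd] at e1
        omega
      have hunc : ((univ \ P.biUnion id).card : ℝ) + η * n ≤ (k + 2) * η * n := by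
        nlinarith
      have hhalf : ((k:ℝ) + 2) * η * n ≤ n / 2 := by
        have := mul_le_mul_of_nonneg_right (hle1.trans hε2) hn0.le
        linarith
      obtain ⟨P', m', hf', g1, g2, g3, g4⟩ := hT' V (le_trans (le_max_right _ _) hn) W
        (P.biUnion id) hWc (hunc.trans hhalf)
      refine ⟨P', m', hf', g1, g2.trans (le_max_right _ _), ?_, ?_⟩
      · refine g4.trans (hunc.trans (le_of_eq ?_)); push_cast; ring
      · have hinc := incr H hH hε P m hf.1 hf.2.1 hf.2.2 W1 W2 W3 hW P' ?_ ?_ ?_ ?_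
        · have hadd := hf.card_add
          rw [← hnd] at hadd
          have k1 : (n:ℝ) / 2 ≤ P.card * m := by
            have : 0 ≤ η * n := by positivity
            linarith
          have k2 : ((n:ℝ) / 2)^3 ≤ (P.card * m)^3 := pow_le_pow_left₀ (by positivity) k1 3
          have k3 : c * (n:ℝ)^3 ≤ (badT H ε P).card * (ε^5 * (m:ℝ)^3) := by
            calc c * (n:ℝ)^3 = ε^6 * ((n:ℝ)/2)^3 := by rw [hc]; ring
              _ ≤ ε^6 * (P.card * m)^3 := by gcongr
              _ = (ε * (P.card:ℝ)^3) * (ε^5 * (m:ℝ)^3) := by ring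
              _ ≤ _ := by
                apply mul_le_mul_of_nonneg_right (not_le.mp hb).le (by positivity)
          push_cast
          linarith
        · intro A' hA'
          obtain ⟨hsub, hresp⟩ := g3 A' hA'
          have hne : A'.Nonempty := by
            rw [← Finset.card_pos, hf'.2.1 A' hA']; exact hf'.1
          obtain ⟨x, hx⟩ := hne
          obtain ⟨A, hA, hxA⟩ := Finset.mem_biUnion.mp (hsub hx)
          exact ⟨A, hA, fun y hy => hresp A (by simp [hWd, hA]) x hx y hy hxA⟩
        · intro p hp A hA
          exact (g3 A hA).2 (W1 p) (by
            simp only [hWd, Finset.mem_union]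
            exact Or.inr (Or.inl (Finset.mem_image_of_mem _ hp)))
        · intro p hp A hA
          exact (g3 A hA).2 (W2 p) (by
            simp only [hWd, Finset.mem_union]
            exact Or.inr (Or.inr (Or.inl (Finset.mem_image_of_mem _ hp))))
        · intro p hp A hA
          exact (g3 A hA).2 (W3 p) (by
            simp only [hWd, Finset.mem_union]
            exact Or.inr (Or.inr (Or.inr (Finset.mem_image_of_mem _ hp))))
  obtain ⟨T, N, hN, h⟩ := claim K le_rfl
  refine ⟨T, N, ?_⟩
  intro V _ _ hn H hH
  rcases h V hn H hH with hg | ⟨P, m, -, -, -, -, hE⟩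
  · exact hg
  · exfalso
    have h1 := energy_le_card H P
    have hn0 : (0:ℝ) < Fintype.card V := by
      have : 0 < Fintype.card V := by omega
      exact_mod_cast this
    have : 0 < (Fintype.card V : ℝ)^3 := by positivity
    nlinarith

end Reg
section Deg

lemma eCross_card {V : Type} [DecidableEq V] (H : Finset (Finset V))
    (hH : ∀ e ∈ H, e.card = 3) (A B C : Finset V)
    (hAB : Disjoint A B) (hAC : Disjoint A C) (hBC : Disjoint B C) :
    ((A ×ˢ B ×ˢ C).filter (fun p => ({p.1, p.2.1, p.2.2} : Finset V) ∈ H)).card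
      = eCross H A B C := by
  have := eCross_eq H hH A B C hAB hAC hBC
  unfold indF at this
  rw [Finset.sum_boole] at this
  exact_mod_cast this.symm

variable {V : Type} [Fintype V] [DecidableEq V]

lemma deg2 (H : Finset (Finset V)) (hH : ∀ e ∈ H, e.card = 3) (v : V) :
    2 * (H.filter (fun e => v ∈ e)).card ≤
      ((univ : Finset (V × V)).filter (fun q => ({v, q.1, q.2} : Finset V) ∈ H)).card := by
  rw [Finset.card_eq_sum_card_fiberwise (f := fun q : V × V => ({v, q.1, q.2} : Finset V))
    (t := H.filter (fun e => v ∈ e))]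
  · rw [mul_comm, ← smul_eq_mul]
    apply Finset.card_nsmul_le_sum
    intro e he
    obtain ⟨heH, hve⟩ := Finset.mem_filter.mp he
    have hc : (e.erase v).card = 2 := by rw [Finset.card_erase_of_mem hve, hH e heH]
    obtain ⟨a, b, hab, hE⟩ := Finset.card_eq_two.mp hc
    have hins : ({v, a, b} : Finset V) = e := by
      rw [← Finset.insert_erase hve, hE]
    have hins' : ({v, b, a} : Finset V) = e := by
      rw [← hins]; congr 1; exact Finset.pair_comm _ _
    have h2 : ({(a, b), (b, a)} : Finset (V × V)).card = 2 := by
      apply Finset.card_pair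
      intro h; simp only [Prod.mk.injEq] at h; exact hab h.1
    rw [← h2]
    apply Finset.card_le_card
    intro q hq
    simp only [Finset.mem_insert, Finset.mem_singleton] at hq
    rcases hq with rfl | rfl
    · simp [hins, heH]
    · simp [hins', heH]
  · intro q hq
    simp only [Finset.coe_filter, Finset.mem_univ, true_and, Set.mem_ofPred_eq] at hq ⊢
    exact ⟨hq, by simp⟩

lemma cover (H : Finset (Finset V)) (hH : ∀ e ∈ H, e.card = 3)
    (Q : Finset (Finset V)) (m : ℕ) (hf : IsFam Q m) (A : Finset V) (hA : A ∈ Q) :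
    ((A ×ˢ (univ : Finset V) ×ˢ (univ : Finset V)).filter
      (fun p => ({p.1, p.2.1, p.2.2} : Finset V) ∈ H)).card ≤
    2 * (m * (univ \ Q.biUnion id).card * Fintype.card V) + 3 * (m * m * Fintype.card V) +
    ∑ q ∈ (Q ×ˢ Q).filter (fun q => A ≠ q.1 ∧ A ≠ q.2 ∧ q.1 ≠ q.2), eCross H A q.1 q.2 := by
  set R := univ \ Q.biUnion id with hR
  set n := Fintype.card V with hn
  set D := (Q ×ˢ Q).filter (fun q => A ≠ q.1 ∧ A ≠ q.2 ∧ q.1 ≠ q.2) with hD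
  have hAm := hf.2.1 A hA
  have hsub : ((A ×ˢ (univ : Finset V) ×ˢ (univ : Finset V)).filter
      (fun p => ({p.1, p.2.1, p.2.2} : Finset V) ∈ H)) ⊆
      (A ×ˢ R ×ˢ univ) ∪ ((A ×ˢ univ ×ˢ R) ∪ ((A ×ˢ A ×ˢ univ) ∪ ((A ×ˢ univ ×ˢ A) ∪
      ((Q.biUnion (fun B => A ×ˢ B ×ˢ B)) ∪ (D.biUnion (fun q => (A ×ˢ q.1 ×ˢ q.2).filter
      (fun p => ({p.1, p.2.1, p.2.2} : Finset V) ∈ H))))))) := by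
    rintro ⟨x, y, z⟩ hp
    simp only [Finset.mem_filter, Finset.mem_product, Finset.mem_univ, and_true] at hp
    obtain ⟨hx, hpH⟩ := hp
    simp only [Finset.mem_union, Finset.mem_product, Finset.mem_univ, true_and, and_true, hx,
      Finset.mem_biUnion, Finset.mem_filter, hpH]
    by_cases hy : y ∈ R
    · exact Or.inl hy
    by_cases hz : z ∈ R
    · exact Or.inr (Or.inl hz)
    simp only [hR, Finset.mem_sdiff, Finset.mem_univ, true_and, not_not,
      Finset.mem_biUnion, id] at hy hz
    obtain ⟨B, hB, hyB⟩ := hy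
    obtain ⟨C, hC, hzC⟩ := hz
    by_cases h1 : A = B
    · subst h1; exact Or.inr (Or.inr (Or.inl hyB))
    by_cases h2 : A = C
    · subst h2; exact Or.inr (Or.inr (Or.inr (Or.inl hzC)))
    by_cases h3 : B = C
    · subst h3; exact Or.inr (Or.inr (Or.inr (Or.inr (Or.inl ⟨B, hB, hyB, hzC⟩))))
    · refine Or.inr (Or.inr (Or.inr (Or.inr (Or.inr ⟨(B, C), ?_, hyB, hzC⟩))))
      simp only [hD, Finset.mem_filter, Finset.mem_product]
      exact ⟨⟨hB, hC⟩, h1, h2, h3⟩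
  have hc := Finset.card_le_card hsub
  have u1 := Finset.card_union_le (A ×ˢ R ×ˢ univ) ((A ×ˢ univ ×ˢ R) ∪ ((A ×ˢ A ×ˢ univ) ∪ ((A ×ˢ univ ×ˢ A) ∪
      ((Q.biUnion (fun B => A ×ˢ B ×ˢ B)) ∪ (D.biUnion (fun q => (A ×ˢ q.1 ×ˢ q.2).filter
      (fun p => ({p.1, p.2.1, p.2.2} : Finset V) ∈ H)))))))
  have u2 := Finset.card_union_le (A ×ˢ univ ×ˢ R) ((A ×ˢ A ×ˢ univ) ∪ ((A ×ˢ univ ×ˢ A) ∪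
      ((Q.biUnion (fun B => A ×ˢ B ×ˢ B)) ∪ (D.biUnion (fun q => (A ×ˢ q.1 ×ˢ q.2).filter
      (fun p => ({p.1, p.2.1, p.2.2} : Finset V) ∈ H))))))
  have u3 := Finset.card_union_le (A ×ˢ A ×ˢ univ) ((A ×ˢ univ ×ˢ A) ∪
      ((Q.biUnion (fun B => A ×ˢ B ×ˢ B)) ∪ (D.biUnion (fun q => (A ×ˢ q.1 ×ˢ q.2).filter
      (fun p => ({p.1, p.2.1, p.2.2} : Finset V) ∈ H)))))
  have u4 := Finset.card_union_le (A ×ˢ univ ×ˢ A)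
      ((Q.biUnion (fun B => A ×ˢ B ×ˢ B)) ∪ (D.biUnion (fun q => (A ×ˢ q.1 ×ˢ q.2).filter
      (fun p => ({p.1, p.2.1, p.2.2} : Finset V) ∈ H))))
  have u5 := Finset.card_union_le (Q.biUnion (fun B => A ×ˢ B ×ˢ B))
      (D.biUnion (fun q => (A ×ˢ q.1 ×ˢ q.2).filter
      (fun p => ({p.1, p.2.1, p.2.2} : Finset V) ∈ H)))
  have c1 : (A ×ˢ R ×ˢ (univ : Finset V)).card = m * R.card * n := by
    simp only [Finset.card_product, hAm, Finset.card_univ, hn]; ring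
  have c2 : (A ×ˢ (univ : Finset V) ×ˢ R).card = m * R.card * n := by
    simp only [Finset.card_product, hAm, Finset.card_univ, hn]; ring
  have c3 : (A ×ˢ A ×ˢ (univ : Finset V)).card = m * m * n := by
    simp only [Finset.card_product, hAm, Finset.card_univ, hn]; ring
  have c4 : (A ×ˢ (univ : Finset V) ×ˢ A).card = m * m * n := by
    simp only [Finset.card_product, hAm, Finset.card_univ, hn]; ring
  have c5 : (Q.biUnion (fun B => A ×ˢ B ×ˢ B)).card ≤ m * m * n := by
    refine Finset.card_biUnion_le.trans ?_
    have hq : Q.card * m ≤ n := by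
      rw [← hf.card_biUnion]; exact Finset.card_le_univ _
    calc ∑ B ∈ Q, (A ×ˢ B ×ˢ B).card = ∑ B ∈ Q, m * (m * m) := by
          apply Finset.sum_congr rfl
          intro B hB
          simp only [Finset.card_product, hAm, hf.2.1 B hB]
      _ = m * m * (Q.card * m) := by rw [Finset.sum_const, smul_eq_mul]; ring
      _ ≤ _ := Nat.mul_le_mul_left _ hq
  have c6 : (D.biUnion (fun q => (A ×ˢ q.1 ×ˢ q.2).filter
      (fun p => ({p.1, p.2.1, p.2.2} : Finset V) ∈ H))).card ≤ ∑ q ∈ D, eCross H A q.1 q.2 := by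
    refine Finset.card_biUnion_le.trans (le_of_eq ?_)
    apply Finset.sum_congr rfl
    intro q hq
    simp only [hD, Finset.mem_filter, Finset.mem_product] at hq
    exact eCross_card H hH _ _ _ (hf.2.2 _ hA _ hq.1.1 hq.2.1) (hf.2.2 _ hA _ hq.1.2 hq.2.2.1)
      (hf.2.2 _ hq.1.1 _ hq.1.2 hq.2.2.2)
  omega

open Classical in
lemma deg_lower (H : Finset (Finset V)) (hH : ∀ e ∈ H, e.card = 3) (ε d δ : ℝ) (hd : 0 ≤ d)
    (Q : Finset (Finset V)) (m : ℕ) (hf : IsFam Q m) (A : Finset V) (hA : A ∈ Q)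
    (hδ : ∀ v : V, δ * ((Fintype.card V).choose 2 : ℝ) ≤
        ((H.filter (fun e => v ∈ e)).card : ℝ)) :
    (m:ℝ) * δ * ((Fintype.card V : ℝ) * (Fintype.card V - 1)) ≤
      2 * m * (univ \ Q.biUnion id).card * Fintype.card V + 3 * (m:ℝ)^2 * Fintype.card V +
      (m:ℝ)^3 * ((((Q ×ˢ Q).filter (fun q => (A ≠ q.1 ∧ A ≠ q.2 ∧ q.1 ≠ q.2) ∧
          ClusterEdge H ε d A q.1 q.2)).card : ℝ) +
        (((Q ×ˢ Q).filter (fun q => (A ≠ q.1 ∧ A ≠ q.2 ∧ q.1 ≠ q.2) ∧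
          ¬ EpsRegTriple H ε A q.1 q.2)).card : ℝ)) +
      d * (m:ℝ)^3 * ((Q.card : ℝ) * (Q.card - 1)) := by
  have hcov := cover H hH Q m hf A hA
  set n := Fintype.card V with hn
  set D := (Q ×ˢ Q).filter (fun q => A ≠ q.1 ∧ A ≠ q.2 ∧ q.1 ≠ q.2) with hD
  set X := ((A ×ˢ (univ : Finset V) ×ˢ (univ : Finset V)).filter
      (fun p => ({p.1, p.2.1, p.2.2} : Finset V) ∈ H)) with hX
  have hAm := hf.2.1 A hA
  have hm0 : (0:ℝ) < m := by exact_mod_cast hf.1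
  -- lower bound
  have hlow : (m:ℝ) * δ * ((n : ℝ) * (n - 1)) ≤ X.card := by
    have e1 : X.card = ∑ v ∈ A, ((univ : Finset (V × V)).filter
        (fun q => ({v, q.1, q.2} : Finset V) ∈ H)).card := by
      rw [hX, Finset.card_filter, Finset.sum_product]
      apply Finset.sum_congr rfl
      intro v _
      rw [Finset.card_filter, Finset.univ_product_univ]
    have e2 : ∀ v ∈ A, δ * ((n:ℝ) * (n - 1)) ≤ (((univ : Finset (V × V)).filter
        (fun q => ({v, q.1, q.2} : Finset V) ∈ H)).card : ℝ) := by
      intro v _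
      have h1 := hδ v
      have h2 : (2:ℝ) * (H.filter (fun e => v ∈ e)).card ≤ (((univ : Finset (V × V)).filter
        (fun q => ({v, q.1, q.2} : Finset V) ∈ H)).card : ℝ) := by exact_mod_cast deg2 H hH v
      rw [Nat.cast_choose_two] at h1
      linarith
    have e3 := Finset.card_nsmul_le_sum A _ _ e2
    rw [nsmul_eq_mul, hAm] at e3
    rw [e1]; push_cast; linarith
  have hcov' : (X.card : ℝ) ≤ 2 * (m * (univ \ Q.biUnion id).card * n) + 3 * (m * m * n) +
      ∑ q ∈ D, (eCross H A q.1 q.2 : ℝ) := by exact_mod_cast hcov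
  have hterm : ∀ q ∈ D, (eCross H A q.1 q.2 : ℝ) ≤ (m:ℝ)^3 *
      ((if ClusterEdge H ε d A q.1 q.2 then 1 else 0) +
       (if ¬ EpsRegTriple H ε A q.1 q.2 then 1 else 0)) + d * (m:ℝ)^3 := by
    intro q hq
    simp only [hD, Finset.mem_filter, Finset.mem_product] at hq
    have hm3 : (0:ℝ) < (m:ℝ)^3 := by positivity
    have hub : (eCross H A q.1 q.2 : ℝ) ≤ (m:ℝ)^3 := by
      have h1 := eCross_card H hH _ _ _ (hf.2.2 _ hA _ hq.1.1 hq.2.1)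
        (hf.2.2 _ hA _ hq.1.2 hq.2.2.1) (hf.2.2 _ hq.1.1 _ hq.1.2 hq.2.2.2)
      have h2 : eCross H A q.1 q.2 ≤ m * (m * m) := by
        rw [← h1]
        refine (Finset.card_filter_le _ _).trans (le_of_eq ?_)
        simp only [Finset.card_product, hAm, hf.2.1 _ hq.1.1, hf.2.1 _ hq.1.2]
      have h3 : (eCross H A q.1 q.2 : ℝ) ≤ (m:ℝ) * (m * m) := by exact_mod_cast h2
      linarith [h3, (by ring : (m:ℝ) * (m * m) = (m:ℝ)^3)]
    have hdm : 0 ≤ d * (m:ℝ)^3 := by positivity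
    by_cases hr : EpsRegTriple H ε A q.1 q.2
    · by_cases hc : ClusterEdge H ε d A q.1 q.2
      · simp only [hc, hr, not_true, if_true, if_false]; linarith
      · have : triDensity H A q.1 q.2 < d := by
          by_contra hge
          exact hc ⟨hr, not_lt.mp hge⟩
        unfold triDensity at this
        rw [hAm, hf.2.1 _ hq.1.1, hf.2.1 _ hq.1.2, div_lt_iff₀ (by positivity)] at this
        simp only [hc, hr, not_true, if_false]
        linarith [(by ring : d * ((m:ℝ) * m * m) = d * (m:ℝ)^3)]
    · have hc : ¬ ClusterEdge H ε d A q.1 q.2 := fun h => hr h.1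
      simp only [hc, hr, not_false_eq_true, if_true, if_false]; linarith
  have hsum := Finset.sum_le_sum hterm
  rw [Finset.sum_add_distrib, ← Finset.mul_sum, Finset.sum_add_distrib, Finset.sum_boole,
    Finset.sum_boole, Finset.sum_const, nsmul_eq_mul, hD, Finset.filter_filter,
    Finset.filter_filter, ← hD] at hsum
  have hDc : (D.card : ℝ) ≤ (Q.card : ℝ) * (Q.card - 1) := by
    have h1 : D ⊆ Q.offDiag := by
      intro q hq
      simp only [hD, Finset.mem_filter, Finset.mem_product] at hq
      rw [Finset.mem_offDiag]
      exact ⟨hq.1.1, hq.1.2, hq.2.2.2⟩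
    have h2 := Finset.card_le_card h1
    rw [Finset.offDiag_card] at h2
    have h3 : Q.card ≤ Q.card * Q.card := Nat.le_mul_self _
    have h4 : (D.card : ℝ) ≤ ((Q.card * Q.card - Q.card : ℕ) : ℝ) := by exact_mod_cast h2
    rw [Nat.cast_sub h3] at h4
    push_cast at h4; linarith
  have hfin : (D.card : ℝ) * (d * (m:ℝ)^3) ≤ (Q.card : ℝ) * (Q.card - 1) * (d * (m:ℝ)^3) := by
    gcongr
  nlinarith [hfin, hsum, hcov', hlow]

lemma numeric (m t n R E b δ d ε β : ℝ) (hm : 1 ≤ m) (ht : 2 ≤ t) (hδ : 0 ≤ δ) (hβ : 0 < β)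
    (hε : 0 < ε) (hR : R ≤ 2 * β * n) (hn1 : t * m ≤ n) (hn2 : n ≤ 2 * t * m)
    (hb : b ≤ 4 * β * t^2) (hβε : β ≤ ε / 80) (hεt : 24 ≤ ε * t)
    (h : m * δ * (n * (n - 1)) ≤ 2 * m * R * n + 3 * m^2 * n + m^3 * (E + b)
      + d * m^3 * (t * (t - 1))) :
    (δ - ε - d) * (t * (t - 1)) ≤ E := by
  have htm : 2 ≤ t * m := by nlinarith
  have hn0 : 0 < n := by linarith
  have h1 : m^2 * (t * (t - 1)) ≤ n * (n - 1) := by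
    have a1 : t * m - m ≤ n - 1 := by nlinarith
    have a2 : 0 ≤ t * m - m := by nlinarith
    calc m^2 * (t * (t - 1)) = (t * m) * (t * m - m) := by ring
      _ ≤ n * (n - 1) := by gcongr
  have h2 : m^3 * (δ * (t * (t - 1))) ≤ m * δ * (n * (n - 1)) := by
    calc m^3 * (δ * (t * (t - 1))) = m * δ * (m^2 * (t * (t - 1))) := by ring
      _ ≤ _ := by gcongr
  have h3 : 2 * m * R * n ≤ m^3 * (16 * β * t^2) := by
    calc 2 * m * R * n ≤ 2 * m * (2 * β * n) * n := by gcongr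
      _ = 4 * m * β * n^2 := by ring
      _ ≤ 4 * m * β * (2 * t * m)^2 := by gcongr
      _ = _ := by ring
  have h4 : 3 * m^2 * n ≤ m^3 * (6 * t) := by
    calc 3 * m^2 * n ≤ 3 * m^2 * (2 * t * m) := by gcongr
      _ = _ := by ring
  have h5 : m^3 * b ≤ m^3 * (4 * β * t^2) := by gcongr
  have h6 : m^3 * (δ * (t * (t - 1))) ≤
      m^3 * (16 * β * t^2 + 6 * t + E + 4 * β * t^2 + d * (t * (t - 1))) := by nlinarith
  have h7 := le_of_mul_le_mul_left h6 (by positivity)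
  have h8 : β * t^2 ≤ ε / 80 * t^2 := by gcongr
  have h9 : 24 * t ≤ ε * t^2 := by nlinarith
  have h10 : ε * t^2 / 2 ≤ ε * (t * (t - 1)) := by
    have : 0 ≤ ε * (t * (t - 2)) := by
      apply mul_nonneg hε.le; nlinarith
    nlinarith
  nlinarith

end Deg
lemma choose3_lower (t : ℕ) (ht : 4 ≤ t) : (t:ℝ)^3 / 24 ≤ (t.choose 3 : ℝ) := by
  have h := Nat.choose_succ_right_eq t 2
  have h' : (t.choose 3 : ℝ) * 3 = (t.choose 2 : ℝ) * (t - 2) := by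
    have h2 : ((t - 2 : ℕ) : ℝ) = (t:ℝ) - 2 := by rw [Nat.cast_sub (by omega)]; norm_num
    rw [← h2]
    exact_mod_cast h
  rw [Nat.cast_choose_two] at h'
  have ht' : (4:ℝ) ≤ t := by exact_mod_cast ht
  have h3 : (t:ℝ)^2 / 4 ≤ ((t:ℝ) - 1) * (t - 2) := by nlinarith
  have h4 : (t:ℝ) * ((t:ℝ)^2 / 4) ≤ t * (((t:ℝ) - 1) * (t - 2)) := by gcongr
  nlinarith

theorem cluster_hypergraph_min_degree (γ d ε : ℝ) (hε : 0 < ε) (hεd : ε < d) (hdγ : d < γ)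
    (t₀ : ℕ) :
    ∃ T₀ n₀ : ℕ, ∀ (V : Type) [Fintype V] [DecidableEq V], ∀ (H : Finset (Finset V)) (n : ℕ),
      Fintype.card V = n → n₀ < n →
      (∀ e ∈ H, e.card = 3) →
      (∀ v : V, (7 / 16 + γ) * (n.choose 2 : ℝ) ≤
        ((H.filter (fun e => v ∈ e)).card : ℝ)) →
      ∃ (t : ℕ) (V0 : Finset V) (Vs : Fin t → Finset V),
        t₀ < t ∧ t < T₀ ∧
        (∀ i, Disjoint V0 (Vs i)) ∧
        (∀ i j, i ≠ j → Disjoint (Vs i) (Vs j)) ∧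
        (V0 ∪ Finset.univ.biUnion Vs = Finset.univ) ∧
        (∀ i j, (Vs i).card = (Vs j).card) ∧
        ((V0.card : ℝ) ≤ ε * n) ∧
        ((({p : Fin t × Fin t × Fin t | p.1 < p.2.1 ∧ p.2.1 < p.2.2 ∧
            ¬ EpsRegTriple H ε (Vs p.1) (Vs p.2.1) (Vs p.2.2)}).ncard : ℝ)
          ≤ ε * (t.choose 3 : ℝ)) ∧
        ∀ i : Fin t,
          (7 / 16 + γ - ε - d) * (t.choose 2 : ℝ) ≤
            (({p : Fin t × Fin t | p.1 < p.2 ∧ p.1 ≠ i ∧ p.2 ≠ i ∧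
              ClusterEdge H ε d (Vs i) (Vs p.1) (Vs p.2)}).ncard : ℝ) := by

  classical
  set β : ℝ := min ε 1 / 200 with hβd
  have hβ : 0 < β := by positivity
  have hβε : β ≤ ε / 200 := by
    have := min_le_left ε 1
    rw [hβd]; linarith
  have hβ1 : β ≤ 1 / 200 := by
    have := min_le_right ε 1
    rw [hβd]; linarith
  have hβ2 : β^2 ≤ β / 200 := by nlinarith
  obtain ⟨T, N, hreg⟩ := wreg (β^2) (by positivity) (by linarith)
    (2 * (t₀ + 1 + ⌈24 / ε⌉₊ + 4))
  refine ⟨T + 1, N, ?_⟩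
  intro V _ _ H n hVn hn hH hdeg
  obtain ⟨P, m, hf, ht1, hT, hunc, hbad⟩ := hreg V (by omega) H hH
  rw [hVn] at hunc
  set t := P.card with ht
  have htR : (2:ℝ) * (t₀ + 1 + ⌈24 / ε⌉₊ + 4) ≤ t := by exact_mod_cast ht1
  have hceil := Nat.le_ceil (24 / ε)
  have hc0 : (0:ℝ) ≤ (⌈24 / ε⌉₊ : ℝ) := Nat.cast_nonneg _
  have ht00 : (0:ℝ) ≤ (t₀ : ℝ) := Nat.cast_nonneg _
  have htpos : (0:ℝ) < t := by linarith
  set B := badT H (β^2) P with hB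
  set rem := P.filter (fun A => β * (t:ℝ)^2 < ((B.filter (fun p => p.1 = A)).card : ℝ)) with hrem
  have hremc : (rem.card : ℝ) ≤ β * t := by
    have h1 : B.card = ∑ A ∈ P, (B.filter (fun p => p.1 = A)).card :=
      Finset.card_eq_sum_card_fiberwise (fun p hp => (mem_badT.mp hp).1.1)
    have h2 : (∑ A ∈ rem, ((B.filter (fun p => p.1 = A)).card : ℝ)) ≤ B.card := by
      rw [h1]; push_cast
      exact Finset.sum_le_sum_of_subset_of_nonneg (Finset.filter_subset _ _)
        (fun _ _ _ => Nat.cast_nonneg _)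
    have h3 := Finset.card_nsmul_le_sum rem
      (fun A => ((B.filter (fun p => p.1 = A)).card : ℝ)) (β * (t:ℝ)^2)
      (fun A hA => (Finset.mem_filter.mp hA).2.le)
    rw [nsmul_eq_mul] at h3
    have h4 : (β * (t:ℝ)^2) * rem.card ≤ (β * (t:ℝ)^2) * (β * t) := by
      calc (β * (t:ℝ)^2) * rem.card ≤ β^2 * (t:ℝ)^3 := by linarith
        _ = _ := by ring
    exact le_of_mul_le_mul_left h4 (by positivity)
  set Q := P \ rem with hQ
  have hQP : Q ⊆ P := Finset.sdiff_subset
  have hQc : Q.card + rem.card = t :=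
    Finset.card_sdiff_add_card_eq_card (Finset.filter_subset _ _)
  have hQcR : (Q.card : ℝ) + rem.card = t := by exact_mod_cast hQc
  have hfQ : IsFam Q m := ⟨hf.1, fun A hA => hf.2.1 A (hQP hA),
    fun A hA C hC => hf.2.2 A (hQP hA) C (hQP hC)⟩
  have haddP := hf.card_add
  have haddQ := hfQ.card_add
  rw [hVn] at haddP haddQ
  rw [← ht] at haddP
  set s := Q.card with hs
  have hts : (t:ℝ) ≤ 2 * s := by nlinarith
  have hsbig : (t₀:ℝ) + 1 + ⌈24 / ε⌉₊ + 4 ≤ s := by linarith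
  have hst : (s:ℝ) ≤ t := by
    have : (0:ℝ) ≤ rem.card := Nat.cast_nonneg _
    linarith
  have hm1 : (1:ℝ) ≤ m := by exact_mod_cast hf.1
  have hnn : (0:ℝ) ≤ n := Nat.cast_nonneg _
  have htm : (t:ℝ) * m ≤ n := by
    have : (0:ℝ) ≤ ((univ \ P.biUnion id).card : ℝ) := Nat.cast_nonneg _
    linarith
  have hR : ((univ \ Q.biUnion id).card : ℝ) ≤ 2 * β * n := by
    have h1 : ((univ \ Q.biUnion id).card : ℝ) = (univ \ P.biUnion id).card + rem.card * m := by
      rw [← hQcR] at haddP; linarith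
    have h2 : (rem.card : ℝ) * m ≤ β * n := by
      calc (rem.card : ℝ) * m ≤ (β * t) * m := by gcongr
        _ = β * (t * m) := by ring
        _ ≤ β * n := by gcongr
    have h3 : β^2 * n ≤ β / 200 * n := by gcongr
    have h4 : 0 ≤ β * n := by positivity
    linarith
  set Vs : Fin s → Finset V := fun i => (Q.equivFin.symm i : Finset V) with hVs
  have hVsQ : ∀ i, Vs i ∈ Q := fun i => (Q.equivFin.symm i).2
  have hVsinj : Function.Injective Vs := fun i j h =>
    Q.equivFin.symm.injective (Subtype.ext h)
  have hVssurj : ∀ A ∈ Q, ∃ i, Vs i = A := fun A hA => ⟨Q.equivFin ⟨A, hA⟩, by simp [hVs]⟩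
  have hbU : univ.biUnion Vs = Q.biUnion id := by
    ext x
    simp only [Finset.mem_biUnion, Finset.mem_univ, true_and, id]
    constructor
    · rintro ⟨i, hi⟩; exact ⟨_, hVsQ i, hi⟩
    · rintro ⟨A, hA, hx⟩; obtain ⟨i, rfl⟩ := hVssurj A hA; exact ⟨i, hx⟩
  have hreg_mono : ∀ A C D, EpsRegTriple H (β^2) A C D → EpsRegTriple H ε A C D :=
    fun A C D h => epsReg_mono H (by linarith) A C D h
  refine ⟨s, univ \ Q.biUnion id, Vs, ?_, ?_, ?_, ?_, ?_, ?_, ?_, ?_, ?_⟩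
  · have : (t₀:ℝ) < s := by linarith
    exact_mod_cast this
  · omega
  · intro i
    rw [← hbU]
    exact Finset.disjoint_of_subset_right
      (Finset.subset_biUnion_of_mem Vs (Finset.mem_univ i)) Finset.sdiff_disjoint
  · intro i j hij
    exact hfQ.2.2 _ (hVsQ i) _ (hVsQ j) (fun h => hij (hVsinj h))
  · rw [hbU]; exact Finset.sdiff_union_of_subset (Finset.subset_univ _)
  · intro i j
    rw [hfQ.2.1 _ (hVsQ i), hfQ.2.1 _ (hVsQ j)]
  · refine hR.trans ?_
    gcongr
    linarith
  · have h1 : ({p : Fin s × Fin s × Fin s | p.1 < p.2.1 ∧ p.2.1 < p.2.2 ∧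
            ¬ EpsRegTriple H ε (Vs p.1) (Vs p.2.1) (Vs p.2.2)}).ncard ≤ B.card := by
      rw [← Set.ncard_coe_finset B]
      apply Set.ncard_le_ncard_of_injOn (fun p => (Vs p.1, Vs p.2.1, Vs p.2.2))
      · rintro ⟨i, j, k⟩ ⟨hij, hjk, hne⟩
        simp only at hij hjk hne
        rw [Finset.mem_coe]
        refine mem_badT.mpr ⟨⟨hQP (hVsQ i), hQP (hVsQ j), hQP (hVsQ k)⟩, ?_, ?_, ?_, ?_⟩
        · exact fun h => hij.ne (hVsinj h)
        · exact fun h => (hij.trans hjk).ne (hVsinj h)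
        · exact fun h => hjk.ne (hVsinj h)
        · exact fun h => hne (hreg_mono _ _ _ h)
      · rintro ⟨i, j, k⟩ _ ⟨i', j', k'⟩ _ h
        simp only [Prod.mk.injEq] at h
        rw [hVsinj h.1, hVsinj h.2.1, hVsinj h.2.2]
    have h2 : ((({p : Fin s × Fin s × Fin s | p.1 < p.2.1 ∧ p.2.1 < p.2.2 ∧
            ¬ EpsRegTriple H ε (Vs p.1) (Vs p.2.1) (Vs p.2.2)}).ncard : ℕ) : ℝ) ≤ B.card := by
      exact_mod_cast h1
    have hs4 : 4 ≤ s := by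
      have : (4:ℝ) ≤ s := by linarith
      exact_mod_cast this
    have h3 := choose3_lower s hs4
    refine h2.trans (hbad.trans ?_)
    calc β^2 * (t:ℝ)^3 ≤ (ε / 192) * (2 * s)^3 := by
          have : β^2 ≤ ε / 192 := by linarith
          gcongr
      _ = ε * ((s:ℝ)^3 / 24) := by ring
      _ ≤ _ := by gcongr
  · intro i
    have hA := hVsQ i
    have hdl := deg_lower H hH ε d (7/16 + γ) (by linarith) Q m hfQ (Vs i) hA
      (by rw [hVn]; exact hdeg)
    rw [hVn] at hdl
    have hb : ((((Q ×ˢ Q).filter (fun q => (Vs i ≠ q.1 ∧ Vs i ≠ q.2 ∧ q.1 ≠ q.2) ∧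
          ¬ EpsRegTriple H ε (Vs i) q.1 q.2)).card : ℕ) : ℝ) ≤ 4 * β * (s:ℝ)^2 := by
      have h1 : ((Q ×ˢ Q).filter (fun q => (Vs i ≠ q.1 ∧ Vs i ≠ q.2 ∧ q.1 ≠ q.2) ∧
          ¬ EpsRegTriple H ε (Vs i) q.1 q.2)).card ≤ (B.filter (fun p => p.1 = Vs i)).card := by
        apply Finset.card_le_card_of_injOn (fun q => (Vs i, q.1, q.2))
        · intro q hq
          simp only [Finset.coe_filter, Finset.mem_product, Set.mem_ofPred_eq] at hq ⊢
          refine ⟨mem_badT.mpr ⟨⟨hQP hA, hQP hq.1.1, hQP hq.1.2⟩, hq.2.1.1, hq.2.1.2.1,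
            hq.2.1.2.2, fun h => hq.2.2 (hreg_mono _ _ _ h)⟩, trivial⟩
        · rintro ⟨a, b⟩ _ ⟨a', b'⟩ _ h
          simp only [Prod.mk.injEq, true_and] at h
          rw [h.1, h.2]
      have h2 : ((B.filter (fun p => p.1 = Vs i)).card : ℝ) ≤ β * (t:ℝ)^2 := by
        by_contra hlt
        have h3 := (Finset.mem_sdiff.mp hA).2
        exact h3 (Finset.mem_filter.mpr ⟨hQP hA, not_le.mp hlt⟩)
      have h1' : ((((Q ×ˢ Q).filter (fun q => (Vs i ≠ q.1 ∧ Vs i ≠ q.2 ∧ q.1 ≠ q.2) ∧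
          ¬ EpsRegTriple H ε (Vs i) q.1 q.2)).card : ℕ) : ℝ) ≤
          (B.filter (fun p => p.1 = Vs i)).card := by exact_mod_cast h1
      calc _ ≤ β * (t:ℝ)^2 := h1'.trans h2
        _ ≤ β * (2 * s)^2 := by gcongr
        _ = _ := by ring
    have hεt : 24 ≤ ε * s := by
      have : 24 / ε ≤ s := by linarith
      rw [div_le_iff₀ hε] at this; linarith
    have hsm1 : (s:ℝ) * m ≤ n := by
      have : (0:ℝ) ≤ ((univ \ Q.biUnion id).card : ℝ) := Nat.cast_nonneg _
      linarith
    have hsm2 : (n:ℝ) ≤ 2 * s * m := by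
      have : 2 * β * n ≤ 2 * (1/200) * n := by gcongr
      linarith
    have hnum := numeric m s n _ _ _ (7/16 + γ) d ε β hm1 (by linarith) (by linarith) hβ hε hR
      hsm1 hsm2 hb (by linarith) hεt hdl
    set S : Set (Fin s × Fin s) := {p : Fin s × Fin s | p.1 < p.2 ∧ p.1 ≠ i ∧ p.2 ≠ i ∧
              ClusterEdge H ε d (Vs i) (Vs p.1) (Vs p.2)} with hS
    have hE : ((Q ×ˢ Q).filter (fun q => (Vs i ≠ q.1 ∧ Vs i ≠ q.2 ∧ q.1 ≠ q.2) ∧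
          ClusterEdge H ε d (Vs i) q.1 q.2)).card ≤ 2 * S.ncard := by
      have hsub : ((Q ×ˢ Q).filter (fun q => (Vs i ≠ q.1 ∧ Vs i ≠ q.2 ∧ q.1 ≠ q.2) ∧
          ClusterEdge H ε d (Vs i) q.1 q.2)) ⊆
          S.toFinset.image (fun p => (Vs p.1, Vs p.2)) ∪
          S.toFinset.image (fun p => (Vs p.2, Vs p.1)) := by
        rintro ⟨a, b⟩ hq
        simp only [Finset.mem_filter, Finset.mem_product] at hq
        obtain ⟨⟨ha, hb⟩, ⟨h1, h2, h3⟩, hc⟩ := hq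
        obtain ⟨j, rfl⟩ := hVssurj a ha
        obtain ⟨k, rfl⟩ := hVssurj b hb
        have hji : j ≠ i := fun h => h1 (by rw [h])
        have hki : k ≠ i := fun h => h2 (by rw [h])
        have hjk : j ≠ k := fun h => h3 (by rw [h])
        rw [Finset.mem_union, Finset.mem_image, Finset.mem_image]
        rcases lt_or_gt_of_ne hjk with hlt | hlt
        · left
          exact ⟨(j, k), Set.mem_toFinset.mpr ⟨hlt, hji, hki, hc⟩, rfl⟩
        · right
          exact ⟨(k, j), Set.mem_toFinset.mpr ⟨hlt, hki, hji, clusterEdge_swap _ _ _ _ _ _ hc⟩, rfl⟩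
      have e1 := (Finset.card_le_card hsub).trans (Finset.card_union_le _ _)
      have e2 := Finset.card_image_le (s := S.toFinset) (f := fun p => (Vs p.1, Vs p.2))
      have e3 := Finset.card_image_le (s := S.toFinset) (f := fun p => (Vs p.2, Vs p.1))
      rw [Set.ncard_eq_toFinset_card']
      omega
    have hE' : ((((Q ×ˢ Q).filter (fun q => (Vs i ≠ q.1 ∧ Vs i ≠ q.2 ∧ q.1 ≠ q.2) ∧
          ClusterEdge H ε d (Vs i) q.1 q.2)).card : ℕ) : ℝ) ≤ 2 * (S.ncard : ℝ) := by
      exact_mod_cast hE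
    rw [Nat.cast_choose_two]
    linarith
end

section
/- There is a fractional hom(M)-tiling h of the hypergraph M itself which has h_min ≥ 1/3 and weight w(h) = 8. -/
open Finset

/-- The edge set of the hypergraph `M` on vertex set `{0,…,7}` (corresponding to
`{1,…,8}`) with edges `{1,2,3}`, `{3,4,5}`, `{4,5,6}`, `{6,7,8}`. -/
def MEdges : Finset (Finset (Fin 8)) :=
  {({0, 1, 2} : Finset (Fin 8)), {2, 3, 4}, {3, 4, 5}, {5, 6, 7}}

/-- `h` is a fractional `hom(M)`-tiling of the hypergraph with edge predicate `E`:
(0) all values lie in `[0,1]`; (a) `h v e ≠ 0` implies `e` is an edge containing `v`;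
(b) the total weight at each vertex is at most `1`; (c) each edge `e = {u,v,w}` has
`h u e = h v e ≥ h w e ≥ (2/3) · h u e` for some labeling of its vertices. -/
def IsFracHomTiling {α : Type} [Fintype α] [DecidableEq α]
    (E : Finset α → Prop) (h : α → Finset α → ℝ) : Prop :=
  (∀ v e, 0 ≤ h v e ∧ h v e ≤ 1) ∧
  (∀ v e, h v e ≠ 0 → E e ∧ v ∈ e) ∧
  (∀ v : α, ∑ e : Finset α, h v e ≤ 1) ∧
  (∀ e : Finset α, E e →
    ∃ u v w : α, e = {u, v, w} ∧ u ≠ v ∧ u ≠ w ∧ v ≠ w ∧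
      h u e = h v e ∧ h w e ≤ h v e ∧ 2 / 3 * h u e ≤ h w e)

/-- The weight `w(h)` of a fractional `hom(M)`-tiling. -/
def tilingWeight {α : Type} [Fintype α] [DecidableEq α] (h : α → Finset α → ℝ) : ℝ :=
  ∑ v : α, ∑ e : Finset α, h v e

/-- The tiling. -/
noncomputable def hM (v : Fin 8) (e : Finset (Fin 8)) : ℝ :=
  if e = {0, 1, 2} then ![1, 1, 2/3, 0, 0, 0, 0, 0] v else
  if e = {2, 3, 4} then ![0, 0, 1/3, 1/2, 1/2, 0, 0, 0] v else
  if e = {3, 4, 5} then ![0, 0, 0, 1/2, 1/2, 1/3, 0, 0] v else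
  if e = {5, 6, 7} then ![0, 0, 0, 0, 0, 2/3, 1, 1] v else 0

lemma hM1 (v : Fin 8) : hM v {0, 1, 2} = ![1, 1, 2/3, 0, 0, 0, 0, 0] v := by
  rw [hM, if_pos rfl]

lemma hM2 (v : Fin 8) : hM v {2, 3, 4} = ![0, 0, 1/3, 1/2, 1/2, 0, 0, 0] v := by
  rw [hM, if_neg (by decide), if_pos rfl]

lemma hM3 (v : Fin 8) : hM v {3, 4, 5} = ![0, 0, 0, 1/2, 1/2, 1/3, 0, 0] v := by
  rw [hM, if_neg (by decide), if_neg (by decide), if_pos rfl]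

lemma hM4 (v : Fin 8) : hM v {5, 6, 7} = ![0, 0, 0, 0, 0, 2/3, 1, 1] v := by
  rw [hM, if_neg (by decide), if_neg (by decide), if_neg (by decide), if_pos rfl]

lemma hM0 (v : Fin 8) (e : Finset (Fin 8)) (he : e ∉ MEdges) : hM v e = 0 := by
  simp only [MEdges, mem_insert, mem_singleton, not_or] at he
  obtain ⟨h1, h2, h3, h4⟩ := he
  rw [hM, if_neg h1, if_neg h2, if_neg h3, if_neg h4]

lemma hM_sum (v : Fin 8) : ∑ e : Finset (Fin 8), hM v e = 1 := by
  rw [← Finset.sum_subset (Finset.subset_univ MEdges) (fun e _ he => hM0 v e he), MEdges,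
    Finset.sum_insert (by decide), Finset.sum_insert (by decide),
    Finset.sum_insert (by decide), Finset.sum_singleton, hM1, hM2, hM3, hM4]
  fin_cases v <;> simp <;> norm_num

lemma hM_cases (v : Fin 8) (e : Finset (Fin 8)) :
    hM v e = 0 ∨ (e ∈ MEdges ∧ v ∈ e ∧ 1 / 3 ≤ hM v e ∧ hM v e ≤ 1) := by
  by_cases he : e ∈ MEdges
  · have he' := he
    simp only [MEdges, mem_insert, mem_singleton] at he'
    rcases he' with rfl | rfl | rfl | rfl
    · rw [hM1]; fin_cases v <;> simp [MEdges] <;> norm_num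
    · rw [hM2]; fin_cases v <;> simp [MEdges] <;> norm_num
    · rw [hM3]; fin_cases v <;> simp [MEdges] <;> norm_num
    · rw [hM4]; fin_cases v <;> simp [MEdges] <;> norm_num
  · exact Or.inl (hM0 v e he)

theorem frac_homM_tiling_of_M :
    ∃ h : Fin 8 → Finset (Fin 8) → ℝ,
      IsFracHomTiling (· ∈ MEdges) h ∧
      (∀ v e, h v e ≠ 0 → 1 / 3 ≤ h v e) ∧
      tilingWeight h = 8 := by
  refine ⟨hM, ⟨?_, ?_, ?_, ?_⟩, ?_, ?_⟩
  · intro v e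
    rcases hM_cases v e with h | ⟨_, _, h1, h2⟩
    · rw [h]; norm_num
    · exact ⟨by linarith, h2⟩
  · intro v e hne
    rcases hM_cases v e with h | ⟨h1, h2, _, _⟩
    · exact absurd h hne
    · exact ⟨h1, h2⟩
  · intro v; exact (hM_sum v).le
  · intro e he
    simp only [MEdges, mem_insert, mem_singleton] at he
    rcases he with rfl | rfl | rfl | rfl
    · refine ⟨0, 1, 2, rfl, by decide, by decide, by decide, ?_⟩
      simp only [hM1]; simp; norm_num
    · refine ⟨3, 4, 2, by decide, by decide, by decide, by decide, ?_⟩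
      simp only [hM2]; simp; norm_num
    · refine ⟨3, 4, 5, rfl, by decide, by decide, by decide, ?_⟩
      simp only [hM3]; simp; norm_num
    · refine ⟨6, 7, 5, by decide, by decide, by decide, by decide, ?_⟩
      simp only [hM4]; simp; norm_num
  · intro v e hne
    rcases hM_cases v e with h | ⟨_, _, h1, _⟩
    · exact absurd h hne
    · exact h1
  · simp [tilingWeight, hM_sum]
end

section
/- For every hypergraph L ∈ 𝓛₂₉ there exists a fractional hom(M)-tiling h of L with h_min ≥ 1/3 and w(h) ≥ 16 + 1/3. -/
open Finset

/-- The vertex set of a hypergraph in the family `𝓛₂₉`: two disjoint copies of the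
vertex set of `M` (each a copy of `Fin 8`) together with two extra vertices `u, v`. -/
abbrev L29V : Type := (Fin 8 ⊕ Fin 8) ⊕ Fin 2

/-- The `i`-th vertex of the first copy `M₁` of `M`. -/
def m1 (i : Fin 8) : L29V := Sum.inl (Sum.inl i)

/-- The `i`-th vertex of the second copy `M₂` of `M`. -/
def m2 (i : Fin 8) : L29V := Sum.inl (Sum.inr i)

/-- The two extra vertices `u` (for `i = 0`) and `v` (for `i = 1`). -/
def uv (i : Fin 2) : L29V := Sum.inr i

/-- The four edges of a copy of `M` (vertices `{1,…,8}`, edges `{1,2,3}`, `{3,4,5}`,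
`{4,5,6}`, `{6,7,8}`) with vertex embedding `c`. -/
def MEdgesOf (c : Fin 8 → L29V) : Finset (Finset L29V) :=
  {({c 0, c 1, c 2} : Finset L29V), {c 2, c 3, c 4}, {c 3, c 4, c 5}, {c 5, c 6, c 7}}

/-- `E` is the edge set of a member of the family `𝓛₂₉`: it consists of the two copies
`M₁`, `M₂` of `M` together with edges through `u` or `v`, each containing exactly one
vertex of `M₁` and one vertex of `M₂`; moreover `{u,a,b} ∈ E ↔ {v,a,b} ∈ E` and
`deg u = deg v ≥ 29`. -/
def IsL29 (E : Finset (Finset L29V)) : Prop :=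
  (∀ e ∈ MEdgesOf m1, e ∈ E) ∧
  (∀ e ∈ MEdgesOf m2, e ∈ E) ∧
  (∀ e ∈ E, e ∈ MEdgesOf m1 ∨ e ∈ MEdgesOf m2 ∨
    ∃ (w : Fin 2) (a b : Fin 8), e = {uv w, m1 a, m2 b}) ∧
  (∀ a b : Fin 8, ({uv 0, m1 a, m2 b} : Finset L29V) ∈ E ↔
    ({uv 1, m1 a, m2 b} : Finset L29V) ∈ E) ∧
  (E.filter (fun e => uv 0 ∈ e)).card = (E.filter (fun e => uv 1 ∈ e)).card ∧
  29 ≤ (E.filter (fun e => uv 0 ∈ e)).card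

/-- Colour classes of the 64 cells: any two distinct cells of the same colour give a tiling. -/
def colT : List ℕ := [
  10, 10, 2, 13, 13, 5, 23, 22,
  2, 2, 10, 5, 5, 13, 23, 22,
  16, 17, 18, 19, 20, 21, 22, 23,
  17, 16, 26, 20, 19, 29, 47, 46,
  17, 16, 34, 26, 29, 37, 47, 46,
  40, 41, 42, 43, 44, 45, 46, 47,
  41, 40, 50, 58, 58, 53, 61, 61,
  41, 40, 58, 50, 50, 61, 53, 53]

def colr (p : Fin 8 × Fin 8) : ℕ := colT.getD (8 * p.1.val + p.2.val) 0

/-- Weights (in sixths, three digits per edge) on the two cross edges through `u`, then on the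
four edges of `M₁`, then of `M₂`; followed by the pairs of cells these weights work for. -/
def certs : List (List ℕ × List (Fin 8 × Fin 8 × Fin 8 × Fin 8)) := [
  ([222, 323, 443, 333, 332, 466, 332, 233, 332, 466],
    [(1, 2, 0, 0), (1, 2, 0, 1), (0, 2, 1, 0), (0, 2, 1, 1)]),
  ([222, 323, 233, 333, 332, 466, 434, 233, 332, 466],
    [(0, 0, 0, 1)]),
  ([222, 323, 443, 333, 332, 466, 664, 233, 0, 466],
    [(1, 5, 0, 3), (1, 5, 0, 4), (0, 5, 1, 3), (0, 5, 1, 4)]),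
  ([323, 323, 233, 333, 332, 466, 664, 233, 0, 666],
    [(0, 3, 0, 4)]),
  ([222, 332, 332, 233, 332, 466, 664, 222, 443, 344],
    [(2, 7, 0, 6), (2, 7, 1, 6), (2, 6, 0, 7), (2, 6, 1, 7)]),
  ([222, 332, 434, 233, 332, 466, 664, 222, 443, 323],
    [(0, 6, 1, 6)]),
  ([222, 332, 434, 233, 332, 466, 664, 222, 443, 332],
    [(0, 7, 1, 7)]),
  ([222, 323, 323, 333, 332, 466, 434, 233, 332, 466],
    [(1, 0, 1, 1)]),
  ([323, 323, 323, 333, 332, 466, 664, 233, 0, 666],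
    [(1, 3, 1, 4)]),
  ([222, 332, 664, 0, 332, 466, 443, 333, 332, 466],
    [(2, 1, 3, 0), (2, 1, 4, 0), (2, 0, 3, 1), (2, 0, 4, 1)]),
  ([332, 332, 664, 233, 0, 666, 233, 333, 332, 466],
    [(3, 0, 4, 0)]),
  ([332, 332, 664, 233, 0, 666, 323, 333, 332, 466],
    [(3, 1, 4, 1)]),
  ([222, 332, 664, 0, 332, 466, 664, 222, 222, 466],
    [(2, 4, 3, 3), (2, 3, 3, 4)]),
  ([222, 332, 664, 233, 0, 466, 664, 222, 443, 344],
    [(5, 7, 3, 6), (5, 7, 4, 6), (5, 6, 3, 7), (5, 6, 4, 7)]),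
  ([332, 332, 664, 233, 0, 666, 664, 222, 443, 323],
    [(3, 6, 4, 6)]),
  ([332, 332, 664, 233, 0, 666, 664, 222, 443, 332],
    [(3, 7, 4, 7)]),
  ([222, 323, 664, 222, 222, 466, 664, 0, 332, 466],
    [(3, 2, 4, 3)]),
  ([222, 323, 664, 222, 222, 466, 664, 233, 0, 466],
    [(3, 5, 4, 4)]),
  ([222, 332, 664, 233, 332, 233, 443, 333, 332, 466],
    [(5, 1, 6, 0), (5, 1, 7, 0), (5, 0, 6, 1), (5, 0, 7, 1)]),
  ([222, 332, 664, 233, 332, 443, 233, 333, 332, 466],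
    [(6, 0, 7, 0)]),
  ([222, 332, 664, 233, 332, 443, 323, 333, 332, 466],
    [(6, 1, 7, 1)]),
  ([222, 323, 664, 222, 443, 344, 664, 0, 332, 466],
    [(7, 2, 6, 3), (7, 2, 6, 4), (6, 2, 7, 3), (6, 2, 7, 4)]),
  ([323, 323, 664, 222, 443, 323, 664, 233, 0, 666],
    [(6, 3, 6, 4)]),
  ([222, 323, 664, 222, 443, 344, 664, 233, 332, 233],
    [(7, 5, 6, 6), (7, 5, 6, 7), (6, 5, 7, 6), (6, 5, 7, 7)]),
  ([222, 323, 664, 222, 443, 323, 664, 233, 332, 443],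
    [(6, 6, 6, 7)]),
  ([323, 323, 664, 222, 443, 332, 664, 233, 0, 666],
    [(7, 3, 7, 4)]),
  ([222, 323, 664, 222, 443, 332, 664, 233, 332, 443],
    [(7, 6, 7, 7)])]

/-- The ten edges used for the cells `(a,b)` and `(c,d)`. -/
def trip (x : Fin 8 × Fin 8 × Fin 8 × Fin 8) (k : Fin 10) : L29V × L29V × L29V :=
  match k with
  | 0 => (uv 0, m1 x.1, m2 x.2.1)
  | 1 => (uv 0, m1 x.2.2.1, m2 x.2.2.2)
  | 2 => (m1 0, m1 1, m1 2)
  | 3 => (m1 2, m1 3, m1 4)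
  | 4 => (m1 3, m1 4, m1 5)
  | 5 => (m1 5, m1 6, m1 7)
  | 6 => (m2 0, m2 1, m2 2)
  | 7 => (m2 2, m2 3, m2 4)
  | 8 => (m2 3, m2 4, m2 5)
  | 9 => (m2 5, m2 6, m2 7)

def tset (t : L29V × L29V × L29V) : Finset L29V := {t.1, t.2.1, t.2.2}

/-- weight (in sixths) of the vertex `v` on the triple `t` with weight code `n` -/
def wt (t : L29V × L29V × L29V) (n : ℕ) (v : L29V) : ℕ :=
  if v = t.1 then n / 100 else if v = t.2.1 then n / 10 % 10 else if v = t.2.2 then n % 10 else 0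

/-- A numerical code of a vertex; codes of edges are sums of codes of vertices. -/
def vcode : L29V → ℕ
  | Sum.inl (Sum.inl i) => 2 ^ i.val
  | Sum.inl (Sum.inr i) => 2 ^ (8 + i.val)
  | Sum.inr i => 2 ^ (16 + i.val)

def tcode (t : L29V × L29V × L29V) : ℕ := vcode t.1 + (vcode t.2.1 + vcode t.2.2)

lemma tcode_eq {t : L29V × L29V × L29V} (h : t.1 ≠ t.2.1 ∧ t.1 ≠ t.2.2 ∧ t.2.1 ≠ t.2.2) :
    ∑ v ∈ tset t, vcode v = tcode t := by
  obtain ⟨h1, h2, h3⟩ := h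
  unfold tset tcode
  rw [Finset.sum_insert (by simp [h1, h2]), Finset.sum_insert (by simp [h3]),
    Finset.sum_singleton]

def okShape (a b c : ℕ) : Prop := a = b ∧ c ≤ b ∧ 2 * a ≤ 3 * c

instance (a b c : ℕ) : Decidable (okShape a b c) := by unfold okShape; infer_instance

def okLow (a : ℕ) : Prop := a = 0 ∨ 2 ≤ a

instance (a : ℕ) : Decidable (okLow a) := by unfold okLow; infer_instance

lemma wt_low {t : L29V × L29V × L29V} {n : ℕ}
    (h : okLow (n / 100) ∧ okLow (n / 10 % 10) ∧ okLow (n % 10)) (v : L29V) :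
    okLow (wt t n v) := by
  unfold wt
  split_ifs
  · exact h.1
  · exact h.2.1
  · exact h.2.2
  · exact Or.inl rfl

structure Good (T : Fin 10 → L29V × L29V × L29V) (n : Fin 10 → ℕ) : Prop where
  ne : ∀ k, (T k).1 ≠ (T k).2.1 ∧ (T k).1 ≠ (T k).2.2 ∧ (T k).2.1 ≠ (T k).2.2
  inj : ∀ k l, tcode (T k) = tcode (T l) → k = l
  low : ∀ k, okLow (n k / 100) ∧ okLow (n k / 10 % 10) ∧ okLow (n k % 10)
  cap : ∀ v, ∑ k, wt (T k) (n k) v ≤ 6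
  tot : 98 ≤ ∑ v, ∑ k, wt (T k) (n k) v
  shp : ∀ k, okShape (n k / 100) (n k / 10 % 10) (n k % 10) ∨
    okShape (n k / 100) (n k % 10) (n k / 10 % 10) ∨
    okShape (n k / 10 % 10) (n k % 10) (n k / 100)

lemma wt_mem {t : L29V × L29V × L29V} {n : ℕ} {v : L29V} (h : wt t n v ≠ 0) : v ∈ tset t := by
  unfold wt at h
  unfold tset
  split_ifs at h with h1 h2 h3 <;> simp_all

lemma tiling_of_good (E : Finset (Finset L29V)) (T : Fin 10 → L29V × L29V × L29V)
    (n : Fin 10 → ℕ) (hG : Good T n)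
    (h3 : ∀ e ∈ E, ∃ u v w : L29V, e = {u, v, w} ∧ u ≠ v ∧ u ≠ w ∧ v ≠ w)
    (hE : ∀ k, tset (T k) ∈ E) :
    ∃ h : L29V → Finset L29V → ℝ,
      IsFracHomTiling (· ∈ E) h ∧
      (∀ v e, h v e ≠ 0 → 1 / 3 ≤ h v e) ∧
      16 + 1 / 3 ≤ tilingWeight h := by
  classical
  let h : L29V → Finset L29V → ℝ := fun v e =>
    ∑ k, if e = tset (T k) then (wt (T k) (n k) v : ℝ) / 6 else 0
  have hk : ∀ v k, h v (tset (T k)) = (wt (T k) (n k) v : ℝ) / 6 := by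
    intro v k
    show ∑ l, (if tset (T k) = tset (T l) then (wt (T l) (n l) v : ℝ) / 6 else 0) = _
    rw [Finset.sum_eq_single k]
    · simp
    · intro l _ hl
      rw [if_neg]
      intro he
      exact hl (hG.inj k l (by
        rw [← tcode_eq (hG.ne k), ← tcode_eq (hG.ne l), he])).symm
    · simp
  have h0 : ∀ v e, (∀ k, e ≠ tset (T k)) → h v e = 0 := by
    intro v e he
    show ∑ l, (if e = tset (T l) then (wt (T l) (n l) v : ℝ) / 6 else 0) = _
    exact Finset.sum_eq_zero (fun l _ => if_neg (he l))
  have hsum : ∀ v, ∑ e : Finset L29V, h v e = ((∑ k, wt (T k) (n k) v : ℕ) : ℝ) / 6 := by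
    intro v
    show ∑ e : Finset L29V, ∑ l, (if e = tset (T l) then (wt (T l) (n l) v : ℝ) / 6 else 0) = _
    rw [Finset.sum_comm, Nat.cast_sum, Finset.sum_div]
    refine Finset.sum_congr rfl fun l _ => ?_
    rw [Finset.sum_ite_eq' Finset.univ]
    simp
  have hcap1 : ∀ v k, wt (T k) (n k) v ≤ 6 := fun v k =>
    (Finset.single_le_sum (f := fun k => wt (T k) (n k) v) (fun _ _ => Nat.zero_le _)
      (Finset.mem_univ k)).trans (hG.cap v)
  refine ⟨h, ⟨?_, ?_, ?_, ?_⟩, ?_, ?_⟩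
  · intro v e
    by_cases he : ∃ k, e = tset (T k)
    · obtain ⟨k, rfl⟩ := he
      rw [hk]
      have : (wt (T k) (n k) v : ℝ) ≤ 6 := by exact_mod_cast hcap1 v k
      constructor
      · positivity
      · linarith
    · push Not at he
      rw [h0 v e he]
      norm_num
  · intro v e hne
    by_cases he : ∃ k, e = tset (T k)
    · obtain ⟨k, rfl⟩ := he
      rw [hk] at hne
      refine ⟨hE k, wt_mem (n := n k) ?_⟩
      intro hz
      rw [hz] at hne
      simp at hne
    · push Not at he
      exact absurd (h0 v e he) hne
  · intro v
    rw [hsum]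
    have : ((∑ k, wt (T k) (n k) v : ℕ) : ℝ) ≤ 6 := by exact_mod_cast hG.cap v
    linarith
  · intro e heE
    by_cases he : ∃ k, e = tset (T k)
    · obtain ⟨k, rfl⟩ := he
      obtain ⟨h1, h2, h3⟩ := hG.ne k
      have e1 : h (T k).1 (tset (T k)) = ((n k / 100 : ℕ) : ℝ) / 6 := by
        rw [hk]; simp [wt]
      have e2 : h (T k).2.1 (tset (T k)) = ((n k / 10 % 10 : ℕ) : ℝ) / 6 := by
        rw [hk]; simp [wt, h1.symm]
      have e3 : h (T k).2.2 (tset (T k)) = ((n k % 10 : ℕ) : ℝ) / 6 := by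
        rw [hk]; simp [wt, h2.symm, h3.symm]
      have key : ∀ a b c : ℕ, okShape a b c →
          (a : ℝ) / 6 = b / 6 ∧ (c : ℝ) / 6 ≤ b / 6 ∧ 2 / 3 * ((a : ℝ) / 6) ≤ c / 6 := by
        rintro a b c ⟨rfl, q2, q3⟩
        have q2' : (c : ℝ) ≤ a := by exact_mod_cast q2
        have q3' : (2 : ℝ) * a ≤ 3 * c := by exact_mod_cast q3
        refine ⟨rfl, ?_, ?_⟩ <;> linarith
      rcases hG.shp k with hs | hs | hs
      · refine ⟨(T k).1, (T k).2.1, (T k).2.2, rfl, h1, h2, h3, ?_⟩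
        rw [e1, e2, e3]
        exact key _ _ _ hs
      · refine ⟨(T k).1, (T k).2.2, (T k).2.1, ?_, h2, h1, h3.symm, ?_⟩
        · unfold tset; ext x; simp; tauto
        rw [e1, e2, e3]
        exact key _ _ _ hs
      · refine ⟨(T k).2.1, (T k).2.2, (T k).1, ?_, h3, h1.symm, h2.symm, ?_⟩
        · unfold tset; ext x; simp; tauto
        rw [e1, e2, e3]
        exact key _ _ _ hs
    · push Not at he
      have hz := fun v => h0 v e he
      obtain ⟨u, v, w, a, b, c, d⟩ := h3 e heE
      exact ⟨u, v, w, a, b, c, d, by simp [hz]⟩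
  · intro v e hne
    by_cases he : ∃ k, e = tset (T k)
    · obtain ⟨k, rfl⟩ := he
      rw [hk] at hne ⊢
      rcases wt_low (t := T k) (hG.low k) v with hl | hl
      · rw [hl] at hne
        simp at hne
      · have : (2 : ℝ) ≤ wt (T k) (n k) v := by exact_mod_cast hl
        linarith
    · push Not at he
      exact absurd (h0 v e he) hne
  · unfold tilingWeight
    simp_rw [hsum]
    rw [← Finset.sum_div, ← Nat.cast_sum]
    have : (98 : ℝ) ≤ ((∑ v, ∑ k, wt (T k) (n k) v : ℕ) : ℝ) := by exact_mod_cast hG.tot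
    linarith

instance (T : Fin 10 → L29V × L29V × L29V) (n : Fin 10 → ℕ) : Decidable (Good T n) :=
  decidable_of_iff
    ((∀ k, (T k).1 ≠ (T k).2.1 ∧ (T k).1 ≠ (T k).2.2 ∧ (T k).2.1 ≠ (T k).2.2) ∧
    (∀ k l, tcode (T k) = tcode (T l) → k = l) ∧
    (∀ k, okLow (n k / 100) ∧ okLow (n k / 10 % 10) ∧ okLow (n k % 10)) ∧
    (∀ v, ∑ k, wt (T k) (n k) v ≤ 6) ∧
    (98 ≤ ∑ v, ∑ k, wt (T k) (n k) v) ∧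
    (∀ k, okShape (n k / 100) (n k / 10 % 10) (n k % 10) ∨
    okShape (n k / 100) (n k % 10) (n k / 10 % 10) ∨
    okShape (n k / 10 % 10) (n k % 10) (n k / 100)))
    ⟨fun ⟨a, b, c, d, e, f⟩ => ⟨a, b, c, d, e, f⟩, fun ⟨a, b, c, d, e, f⟩ => ⟨a, b, c, d, e, f⟩⟩

lemma certs_good' : (certs.all fun c => c.2.all fun x =>
    decide (Good (trip x) (fun k => c.1.getD k.val 0))) = true := by
  decide +kernel

lemma certs_good : ∀ c ∈ certs, ∀ x ∈ c.2, Good (trip x) (fun k => c.1.getD k.val 0) := by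
  simpa only [List.all_eq_true, decide_eq_true_eq] using certs_good'

lemma certs_cover' : ∀ a b c d : Fin 8, colr (a, b) = colr (c, d) → (a = c ∧ b = d) ∨
    (certs.any fun t => t.2.any fun x => x = (a, b, c, d) ∨ x = (c, d, a, b)) = true := by
  decide +kernel

lemma certs_cover (p q : Fin 8 × Fin 8) (hpq : p ≠ q) (hc : colr p = colr q) :
    ∃ c ∈ certs, ∃ x ∈ c.2, x = (p.1, p.2, q.1, q.2) ∨ x = (q.1, q.2, p.1, p.2) := by
  rcases certs_cover' p.1 p.2 q.1 q.2 hc with h | h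
  · exact absurd (Prod.ext h.1 h.2) hpq
  · simpa only [List.any_eq_true, decide_eq_true_eq] using h

lemma colr_card : ((Finset.univ : Finset (Fin 8 × Fin 8)).image colr).card = 28 := by
  decide +kernel

lemma u_notin1 : ∀ e ∈ MEdgesOf m1, uv 0 ∉ e := by
  simp [MEdgesOf, uv, m1]

lemma u_notin2 : ∀ e ∈ MEdgesOf m2, uv 0 ∉ e := by
  simp [MEdgesOf, uv, m2]

theorem frac_homM_tiling_of_L29 (E : Finset (Finset L29V)) (hE : IsL29 E) :
    ∃ h : L29V → Finset L29V → ℝ,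
      IsFracHomTiling (· ∈ E) h ∧
      (∀ v e, h v e ≠ 0 → 1 / 3 ≤ h v e) ∧
      16 + 1 / 3 ≤ tilingWeight h := by
  classical
  obtain ⟨hM1, hM2, hall, -, -, hdeg⟩ := hE
  let C : Finset (Fin 8 × Fin 8) :=
    Finset.univ.filter fun p => ({uv 0, m1 p.1, m2 p.2} : Finset L29V) ∈ E
  have hC : 29 ≤ C.card := by
    refine hdeg.trans ?_
    refine (Finset.card_le_card (t := C.image
      fun p => ({uv 0, m1 p.1, m2 p.2} : Finset L29V)) ?_).trans Finset.card_image_le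
    intro e he
    obtain ⟨heE, hu⟩ := Finset.mem_filter.1 he
    rcases hall e heE with h | h | ⟨w, a, b, rfl⟩
    · exact absurd hu (u_notin1 e h)
    · exact absurd hu (u_notin2 e h)
    · have hw : w = 0 := by
        simp [uv, m1, m2] at hu
        exact hu.symm
      subst hw
      exact Finset.mem_image.2 ⟨(a, b), Finset.mem_filter.2 ⟨Finset.mem_univ _, heE⟩, rfl⟩
  have hlt : ((Finset.univ : Finset (Fin 8 × Fin 8)).image colr).card < C.card := by
    rw [colr_card]; omega
  obtain ⟨p, hp, q, hq, hpq, hc⟩ := Finset.exists_ne_map_eq_of_card_lt_of_maps_to hlt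
    (f := colr) (fun p _ => Finset.mem_image_of_mem _ (Finset.mem_univ p))
  have hp' := (Finset.mem_filter.1 hp).2
  have hq' := (Finset.mem_filter.1 hq).2
  obtain ⟨c, hcm, x, hx, hxe⟩ := certs_cover p q hpq hc
  refine tiling_of_good E (trip x) _ (certs_good c hcm x hx) ?_ ?_
  · intro e he
    rcases hall e he with h | h | ⟨w, a, b, rfl⟩
    · simp only [MEdgesOf, Finset.mem_insert, Finset.mem_singleton] at h
      rcases h with rfl | rfl | rfl | rfl <;> exact ⟨_, _, _, rfl, by decide, by decide, by decide⟩
    · simp only [MEdgesOf, Finset.mem_insert, Finset.mem_singleton] at h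
      rcases h with rfl | rfl | rfl | rfl <;> exact ⟨_, _, _, rfl, by decide, by decide, by decide⟩
    · exact ⟨_, _, _, rfl, by simp [uv, m1], by simp [uv, m2], by simp [m1, m2]⟩
  · intro k
    fin_cases k
    · rcases hxe with rfl | rfl
      · exact hp'
      · exact hq'
    · rcases hxe with rfl | rfl
      · exact hq'
      · exact hp'
    · exact hM1 _ (by simp [MEdgesOf, tset, trip])
    · exact hM1 _ (by simp [MEdgesOf, tset, trip])
    · exact hM1 _ (by simp [MEdgesOf, tset, trip])
    · exact hM1 _ (by simp [MEdgesOf, tset, trip])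
    · exact hM2 _ (by simp [MEdgesOf, tset, trip])
    · exact hM2 _ (by simp [MEdgesOf, tset, trip])
    · exact hM2 _ (by simp [MEdgesOf, tset, trip])
    · exact hM2 _ (by simp [MEdgesOf, tset, trip])
end

section
/- Let L ∈ 𝓛₂₉ with copies M₁, M₂ of M labeled as in the context, and suppose L admits no fractional hom(M)-tiling h with h_min ≥ 1/3 and w(h) ≥ 16 + 1/3. Let L₁ be the bipartite graph on V(M₁) × V(M₂) whose edges are the pairs (a,b) with {u,a,b} ∈ E(L) and {a,b} ∩ {w₁, w₂, w₁', w₂'} = ∅. Then L₁ is a subgraph of a complete bipartite graph K_{3,3} whose one vertex class contains exactly one vertex from each of X, Y, Z and whose other vertex class contains exactly one vertex from each of X', Y', Z'. -/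
open Finset

/-- An item of a certificate: the edge `{p, q, r}` with weights `n, n, k` in units of `1/6`. -/
abbrev CItem : Type := L29V × L29V × L29V × ℕ × ℕ

def cEdge (t : CItem) : Finset L29V := {t.1, t.2.1, t.2.2.1}

def cWt (t : CItem) (v : L29V) : ℕ :=
  if v = t.1 then t.2.2.2.1 else if v = t.2.1 then t.2.2.2.1 else
    if v = t.2.2.1 then t.2.2.2.2 else 0

def cH : List CItem → L29V → Finset L29V → ℕ
  | [], _, _ => 0
  | t :: l, v, e => (if cEdge t = e then cWt t v else 0) + cH l v e

def cLoad : List CItem → L29V → ℕ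
  | [], _ => 0
  | t :: l, v => cWt t v + cLoad l v

def cGood (t : CItem) : Prop :=
  t.1 ≠ t.2.1 ∧ t.1 ≠ t.2.2.1 ∧ t.2.1 ≠ t.2.2.1 ∧
    2 ≤ t.2.2.2.2 ∧ t.2.2.2.2 ≤ t.2.2.2.1 ∧ t.2.2.2.1 ≤ 6 ∧ 2 * t.2.2.2.1 ≤ 3 * t.2.2.2.2

instance (t : CItem) : Decidable (cGood t) := by unfold cGood; infer_instance

lemma cH_not_mem (l : List CItem) (v : L29V) (e : Finset L29V)
    (h : ∀ t ∈ l, cEdge t ≠ e) : cH l v e = 0 := by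
  induction l with
  | nil => rfl
  | cons t l ih =>
    have h1 := h t (by simp)
    have h2 := ih (fun s hs => h s (by simp [hs]))
    simp [cH, h1, h2]

lemma cH_mem (l : List CItem) (hn : l.Pairwise (fun s t => cEdge s ≠ cEdge t)) (t : CItem)
    (ht : t ∈ l) (v : L29V) : cH l v (cEdge t) = cWt t v := by
  induction l with
  | nil => simp at ht
  | cons s l ih =>
    rw [List.pairwise_cons] at hn
    rcases List.mem_cons.1 ht with rfl | h
    · have := cH_not_mem l v (cEdge t) (fun s hs => (hn.1 s hs).symm)
      simp [cH, this]
    · simp [cH, hn.1 t h, ih hn.2 h]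

lemma cH_sum (l : List CItem) (v : L29V) : ∑ e : Finset L29V, cH l v e = cLoad l v := by
  induction l with
  | nil => simp [cH, cLoad]
  | cons t l ih => simp only [cH, cLoad, Finset.sum_add_distrib, ih]; simp

lemma cWt_bd (t : CItem) (ht : cGood t) (v : L29V) :
    cWt t v ≤ 6 ∧ (cWt t v ≠ 0 → v ∈ cEdge t ∧ 2 ≤ cWt t v) := by
  obtain ⟨p, q, r, n, k⟩ := t
  simp only [cGood] at ht
  simp only [cWt, cEdge, Finset.mem_insert, Finset.mem_singleton]
  split_ifs with h1 h2 h3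
  · exact ⟨by omega, fun _ => ⟨Or.inl h1, by omega⟩⟩
  · exact ⟨by omega, fun _ => ⟨Or.inr (Or.inl h2), by omega⟩⟩
  · exact ⟨by omega, fun _ => ⟨Or.inr (Or.inr h3), by omega⟩⟩
  · simp

lemma edge_triple (E : Finset (Finset L29V)) (hE : IsL29 E) (e : Finset L29V) (he : e ∈ E) :
    ∃ u v w : L29V, e = {u, v, w} ∧ u ≠ v ∧ u ≠ w ∧ v ≠ w := by
  rcases hE.2.2.1 e he with h | h | ⟨w, a, b, rfl⟩
  · simp only [MEdgesOf, Finset.mem_insert, Finset.mem_singleton] at h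
    rcases h with rfl | rfl | rfl | rfl
    all_goals exact ⟨_, _, _, rfl, by decide, by decide, by decide⟩
  · simp only [MEdgesOf, Finset.mem_insert, Finset.mem_singleton] at h
    rcases h with rfl | rfl | rfl | rfl
    all_goals exact ⟨_, _, _, rfl, by decide, by decide, by decide⟩
  · exact ⟨_, _, _, rfl, by simp [uv, m1], by simp [uv, m2], by simp [m1, m2]⟩

def cCheck (l : List CItem) : Prop :=
  l.Pairwise (fun s t => cEdge s ≠ cEdge t) ∧ (∀ t ∈ l, cGood t) ∧
    (∀ v, cLoad l v ≤ 6) ∧ 98 ≤ ∑ v, cLoad l v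

instance (l : List CItem) : Decidable (cCheck l) := by unfold cCheck; infer_instance

lemma tiling_of_cert (E : Finset (Finset L29V)) (hE : IsL29 E) (l : List CItem)
    (hl : cCheck l) (hm : ∀ t ∈ l, cEdge t ∈ E) :
    ∃ h : L29V → Finset L29V → ℝ,
      IsFracHomTiling (· ∈ E) h ∧
      (∀ v e, h v e ≠ 0 → 1 / 3 ≤ h v e) ∧
      16 + 1 / 3 ≤ tilingWeight h := by
  obtain ⟨hp, hg, hload, htot⟩ := hl
  have key : ∀ v e, cH l v e ≤ 6 ∧ (cH l v e ≠ 0 → (e ∈ E ∧ v ∈ e) ∧ 2 ≤ cH l v e) := by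
    intro v e
    by_cases h : ∃ t ∈ l, cEdge t = e
    · obtain ⟨t, ht, rfl⟩ := h
      rw [cH_mem l hp t ht]
      have := cWt_bd t (hg t ht) v
      exact ⟨this.1, fun h => ⟨⟨hm t ht, (this.2 h).1⟩, (this.2 h).2⟩⟩
    · push Not at h
      simp [cH_not_mem l v e h]
  have hs : ∀ v, ∑ e : Finset L29V, ((cH l v e : ℝ) / 6) = (cLoad l v : ℝ) / 6 := by
    intro v
    rw [← Finset.sum_div, ← cH_sum]
    push_cast
    rfl
  refine ⟨fun v e => (cH l v e : ℝ) / 6, ⟨?_, ?_, ?_, ?_⟩, ?_, ?_⟩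
  · intro v e
    have : (cH l v e : ℝ) ≤ 6 := by exact_mod_cast (key v e).1
    have h0 : (0 : ℝ) ≤ cH l v e := Nat.cast_nonneg _
    exact ⟨div_nonneg h0 (by norm_num), (div_le_one (by norm_num)).2 this⟩
  · intro v e h
    refine ((key v e).2 ?_).1
    intro h0
    simp [h0] at h
  · intro v
    rw [hs]
    have : (cLoad l v : ℝ) ≤ 6 := by exact_mod_cast hload v
    linarith
  · intro e he
    by_cases h : ∃ t ∈ l, cEdge t = e
    · obtain ⟨t, ht, rfl⟩ := h
      have hgt := hg t ht
      simp only [cH_mem l hp t ht]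
      obtain ⟨p, q, r, n, k⟩ := t
      obtain ⟨h1, h2, h3, h4, h5, h6, h7⟩ := hgt
      simp only at h1 h2 h3 h4 h5 h6 h7
      refine ⟨p, q, r, rfl, h1, h2, h3, ?_⟩
      have e1 : cWt (p, q, r, n, k) p = n := by simp [cWt]
      have e2 : cWt (p, q, r, n, k) q = n := by simp [cWt]
      have e3 : cWt (p, q, r, n, k) r = k := by simp [cWt, h2.symm, h3.symm]
      rw [e1, e2, e3]
      have h5' : (k : ℝ) ≤ n := by exact_mod_cast h5
      have h7' : 2 * (n : ℝ) ≤ 3 * k := by exact_mod_cast h7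
      exact ⟨rfl, by linarith, by linarith⟩
    · push Not at h
      obtain ⟨u, v, w, h1, h2, h3, h4⟩ := edge_triple E hE e he
      refine ⟨u, v, w, h1, h2, h3, h4, ?_⟩
      simp [cH_not_mem l _ e h]
  · intro v e h
    have : 2 ≤ cH l v e := by
      refine ((key v e).2 ?_).2
      intro h0
      simp [h0] at h
    have : (2 : ℝ) ≤ cH l v e := by exact_mod_cast this
    show (1 / 3 : ℝ) ≤ (cH l v e : ℝ) / 6
    linarith
  · simp only [tilingWeight, hs]
    rw [← Finset.sum_div]
    have : (98 : ℝ) ≤ ∑ v, (cLoad l v : ℝ) := by exact_mod_cast htot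
    linarith

/-- Tilings of the remaining part of the copy of `M` where a pair loses `1/2` at both vertices. -/
def certA : Fin 3 → List (Fin 8 × Fin 8 × Fin 8 × ℕ × ℕ)
  | 0 => [(0, 1, 2, 3, 2), (2, 3, 4, 4, 4), (3, 4, 5, 2, 2), (6, 7, 5, 6, 4)]
  | 1 => [(0, 1, 2, 6, 4), (3, 4, 2, 3, 2), (5, 6, 7, 6, 6)]
  | 2 => [(0, 1, 2, 6, 4), (2, 3, 4, 2, 2), (3, 4, 5, 4, 3), (5, 6, 7, 3, 3)]

/-- Tilings of the remaining part of the copy of `M` where two vertices lose `1/3` each. -/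
def certB : Fin 6 → List (Fin 8 × Fin 8 × Fin 8 × ℕ × ℕ)
  | 0 => [(0, 1, 2, 4, 3), (2, 3, 4, 3, 3), (3, 4, 5, 3, 2), (5, 6, 7, 4, 4)]
  | 1 => [(0, 1, 2, 4, 3), (3, 4, 2, 4, 3), (5, 6, 7, 6, 6)]
  | 2 => [(0, 1, 2, 6, 4), (2, 3, 4, 2, 2), (3, 4, 5, 2, 2), (5, 6, 7, 4, 4)]
  | 3 => [(0, 1, 2, 2, 2), (2, 3, 4, 4, 4), (3, 4, 5, 2, 2), (6, 7, 5, 6, 4)]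
  | 4 => [(0, 1, 2, 6, 4), (2, 3, 4, 2, 2), (5, 6, 7, 6, 6)]
  | 5 => [(0, 1, 2, 6, 4), (2, 3, 4, 2, 2), (3, 4, 5, 4, 4), (5, 6, 7, 2, 2)]

def emb (c : Fin 8 → L29V) (t : Fin 8 × Fin 8 × Fin 8 × ℕ × ℕ) : CItem :=
  (c t.1, c t.2.1, c t.2.2.1, t.2.2.2.1, t.2.2.2.2)

def pr1 : Fin 3 → Fin 8
  | 0 => 0
  | 1 => 3
  | 2 => 6

def pr2 : Fin 3 → Fin 8
  | 0 => 1
  | 1 => 4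
  | 2 => 7

def side (s : Bool) : Fin 8 → L29V := if s then m1 else m2

def fullCert (s : Bool) (i : Fin 3) (j : Fin 6) (b b' : Fin 8) : List CItem :=
  (uv 0, side s (pr1 i), side (!s) b, 3, 2) :: (uv 1, side s (pr2 i), side (!s) b', 3, 2) ::
    ((certA i).map (emb (side s)) ++ (certB j).map (emb (side (!s))))

lemma certA_mem : ∀ (s : Bool) (i : Fin 3),
    ∀ t ∈ (certA i).map (emb (side s)), cEdge t ∈ MEdgesOf (side s) := by
  decide +kernel

lemma certB_mem : ∀ (s : Bool) (i : Fin 6),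
    ∀ t ∈ (certB i).map (emb (side s)), cEdge t ∈ MEdgesOf (side s) := by
  decide +kernel

lemma fullCert_check : ∀ (s : Bool) (i : Fin 3) (b b' : Fin 8), b ≠ 2 → b ≠ 5 → b' ≠ 2 → b' ≠ 5 →
    ∃ j : Fin 6, cCheck (fullCert s i j b b') := by
  decide +kernel

lemma no_pair (E : Finset (Finset L29V)) (hE : IsL29 E)
    (hno : ¬ ∃ h : L29V → Finset L29V → ℝ,
      IsFracHomTiling (· ∈ E) h ∧
      (∀ v e, h v e ≠ 0 → 1 / 3 ≤ h v e) ∧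
      16 + 1 / 3 ≤ tilingWeight h) (s : Bool) (i : Fin 3) (b b' : Fin 8)
    (hb : b ≠ 2) (hb1 : b ≠ 5) (hb' : b' ≠ 2) (hb1' : b' ≠ 5)
    (h1 : ({uv 0, side s (pr1 i), side (!s) b} : Finset L29V) ∈ E)
    (h2 : ({uv 1, side s (pr2 i), side (!s) b'} : Finset L29V) ∈ E) : False := by
  obtain ⟨j, hj⟩ := fullCert_check s i b b' hb hb1 hb' hb1'
  have hside : ∀ s, ∀ e ∈ MEdgesOf (side s), e ∈ E := by
    intro s
    cases s
    · exact hE.2.1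
    · exact hE.1
  refine hno (tiling_of_cert E hE _ hj ?_)
  intro t ht
  simp only [fullCert, List.mem_cons, List.mem_append] at ht
  rcases ht with rfl | rfl | ht | ht
  · exact h1
  · exact h2
  · exact hside _ _ (certA_mem _ _ t ht)
  · exact hside _ _ (certB_mem _ _ t ht)

lemma pick (A : Fin 8 → Prop) (x y : Fin 8) (h : A x → A y → False) :
    ∃ p, (p = x ∨ p = y) ∧ (A x → x = p) ∧ (A y → y = p) := by
  by_cases hx : A x
  · exact ⟨x, Or.inl rfl, fun _ => rfl, fun hy => (h hx hy).elim⟩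
  · exact ⟨y, Or.inr rfl, fun hx' => (hx hx').elim, fun _ => rfl⟩

lemma pick3 (A : Fin 8 → Prop) (h : ∀ i, A (pr1 i) → A (pr2 i) → False) :
    ∃ p q r : Fin 8, (p = 0 ∨ p = 1) ∧ (q = 3 ∨ q = 4) ∧ (r = 6 ∨ r = 7) ∧
      ∀ a, A a → a ≠ 2 → a ≠ 5 → (a = p ∨ a = q ∨ a = r) := by
  obtain ⟨p, hp, hp1, hp2⟩ := pick A 0 1 (h 0)
  obtain ⟨q, hq, hq1, hq2⟩ := pick A 3 4 (h 1)
  obtain ⟨r, hr, hr1, hr2⟩ := pick A 6 7 (h 2)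
  refine ⟨p, q, r, hp, hq, hr, ?_⟩
  intro a ha h2 h5
  fin_cases a
  · exact Or.inl (hp1 ha)
  · exact Or.inl (hp2 ha)
  · exact (h2 rfl).elim
  · exact Or.inr (Or.inl (hq1 ha))
  · exact Or.inr (Or.inl (hq2 ha))
  · exact (h5 rfl).elim
  · exact Or.inr (Or.inr (hr1 ha))
  · exact Or.inr (Or.inr (hr2 ha))

/-- If `L ∈ 𝓛₂₉` admits no fractional `hom(M)`-tiling with `h_min ≥ 1/3` and weight at
least `16 + 1/3`, then the bipartite graph `L₁` (the pairs `(a, b)` with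
`{u, a, b} ∈ E(L)` avoiding `w₁, w₂, w₁', w₂'`, i.e. avoiding the indices `2` and `5`
on both sides) is a subgraph of a `K₃,₃` having exactly one vertex in each of
`X = {x₁,x₂}`, `Y = {y₁,y₂}`, `Z = {z₁,z₂}` (indices `{0,1}`, `{3,4}`, `{6,7}`) and
exactly one vertex in each of `X'`, `Y'`, `Z'`. -/
theorem L1_subgraph_of_K33 (E : Finset (Finset L29V)) (hE : IsL29 E)
    (hno : ¬ ∃ h : L29V → Finset L29V → ℝ,
      IsFracHomTiling (· ∈ E) h ∧
      (∀ v e, h v e ≠ 0 → 1 / 3 ≤ h v e) ∧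
      16 + 1 / 3 ≤ tilingWeight h) :
    ∃ p q r p' q' r' : Fin 8,
      (p = 0 ∨ p = 1) ∧ (q = 3 ∨ q = 4) ∧ (r = 6 ∨ r = 7) ∧
      (p' = 0 ∨ p' = 1) ∧ (q' = 3 ∨ q' = 4) ∧ (r' = 6 ∨ r' = 7) ∧
      ∀ a b : Fin 8, ({uv 0, m1 a, m2 b} : Finset L29V) ∈ E →
        a ≠ 2 → a ≠ 5 → b ≠ 2 → b ≠ 5 →
        (a = p ∨ a = q ∨ a = r) ∧ (b = p' ∨ b = q' ∨ b = r') := by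
  obtain ⟨p, q, r, hp, hq, hr, h1⟩ := pick3
    (fun a => ∃ b, ({uv 0, m1 a, m2 b} : Finset L29V) ∈ E ∧ b ≠ 2 ∧ b ≠ 5) (by
      rintro i ⟨b, hb, hb2, hb5⟩ ⟨b', hb', hb2', hb5'⟩
      exact no_pair E hE hno true i b b' hb2 hb5 hb2' hb5' hb ((hE.2.2.2.1 _ _).1 hb'))
  obtain ⟨p', q', r', hp', hq', hr', h2⟩ := pick3
    (fun b => ∃ a, ({uv 0, m1 a, m2 b} : Finset L29V) ∈ E ∧ a ≠ 2 ∧ a ≠ 5) (by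
      rintro i ⟨b, hb, hb2, hb5⟩ ⟨b', hb', hb2', hb5'⟩
      refine no_pair E hE hno false i b b' hb2 hb5 hb2' hb5' ?_ ?_
      · have e : ({uv 0, m2 (pr1 i), m1 b} : Finset L29V) = {uv 0, m1 b, m2 (pr1 i)} := by
          rw [Finset.pair_comm]
        exact e ▸ hb
      · have e : ({uv 1, m2 (pr2 i), m1 b'} : Finset L29V) = {uv 1, m1 b', m2 (pr2 i)} := by
          rw [Finset.pair_comm]
        exact e ▸ ((hE.2.2.2.1 _ _).1 hb'))
  exact ⟨p, q, r, p', q', r', hp, hq, hr, hp', hq', hr', fun a b hab ha2 ha5 hb2 hb5 =>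
    ⟨h1 a ⟨b, hab, hb2, hb5⟩ ha2 ha5, h2 b ⟨a, hab, ha2, ha5⟩ hb2 hb5⟩⟩
end

section
/- For all d > 0 and β > 0 there exist ε > 0 and integers p and m₀ such that for all m > m₀ the following holds. Suppose (V₁, V₂, V₃) is an (ε,d)-regular triple in a 3-uniform hypergraph with |V₁| = |V₂| = 3m and |V₃| = 2m. Then there is a family of at most p pairwise vertex-disjoint loose paths, each edge used having one vertex in each of V₁, V₂, V₃, which covers all but at most βm vertices of V₁ ∪ V₂ ∪ V₃. -/
open Finset

/-- `f` describes a loose path with `k ≥ 1` edges in the `3`-uniform hypergraph `H`: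
the vertices `f 0, f 1, …, f (2k)` are distinct, and for every `i < k` the triple
`{f (2i), f (2i+1), f (2i+2)}` is an edge of `H`. -/
def IsLoosePath {V : Type} [DecidableEq V] (H : Finset (Finset V)) (k : ℕ) (f : ℕ → V) :
    Prop :=
  1 ≤ k ∧
  (∀ i ≤ 2 * k, ∀ j ≤ 2 * k, f i = f j → i = j) ∧
  ∀ i < k, ({f (2 * i), f (2 * i + 1), f (2 * i + 2)} : Finset V) ∈ H

/-- The vertex set of the loose path described by `f` with `k` edges. -/
def pathVerts {V : Type} [DecidableEq V] (k : ℕ) (f : ℕ → V) : Finset V :=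
  (Finset.range (2 * k + 1)).image f

lemma aux_core {V : Type} [DecidableEq V] (t : ℕ) : ∀ (n : ℕ) (W : Finset V) (E : Finset (Finset V)),
    W.card = n → (∀ e ∈ E, e ⊆ W) → t * n < E.card →
    ∃ E' ⊆ E, E'.Nonempty ∧ ∀ e ∈ E', ∀ v ∈ e, t < (E'.filter (fun e' => v ∈ e')).card := by
  intro n
  induction n with
  | zero =>
    intro W E hW hE hc
    have hW0 : W = ∅ := by simpa using hW
    refine ⟨E, Subset.refl _, card_pos.mp (by omega), ?_⟩
    intro e he v hv
    have := hE e he hv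
    simp [hW0] at this
  | succ n ih =>
    intro W E hW hE hc
    by_cases h : ∀ e ∈ E, ∀ v ∈ e, t < (E.filter (fun e' => v ∈ e')).card
    · exact ⟨E, Subset.refl _, card_pos.mp (by omega), h⟩
    · push Not at h
      obtain ⟨e, he, v, hv, hd⟩ := h
      have hsum := card_filter_add_card_filter_not (s := E) (fun e' => v ∈ e')
      obtain ⟨E', h1, h2, h3⟩ := ih (W.erase v) (E.filter (fun e' => ¬ v ∈ e'))
        (by rw [card_erase_of_mem (hE e he hv)]; omega)
        (by
          intro e' he'
          rw [mem_filter] at he'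
          exact subset_erase.mpr ⟨hE _ he'.1, he'.2⟩)
        (by rw [Nat.mul_succ] at hc; omega)
      exact ⟨E', h1.trans (filter_subset _ _), h2, h3⟩

lemma aux_three {V : Type} [DecidableEq V] {e : Finset V} (he : e.card = 3) {x y z : V}
    (hx : x ∈ e) (hy : y ∈ e) (hz : z ∈ e) (hxy : x ≠ y) (hxz : x ≠ z) (hyz : y ≠ z) :
    ({x, y, z} : Finset V) = e := by
  apply eq_of_subset_of_card_le
  · intro a ha
    simp at ha
    rcases ha with rfl | rfl | rfl <;> assumption
  · rw [he, card_eq_three.mpr ⟨x, y, z, hxy, hxz, hyz, rfl⟩]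

lemma aux_greedy {V : Type} [DecidableEq V] (W : Finset V) (E : Finset (Finset V))
    (A : Fin 3 → Finset V) (c : ℕ → Fin 3)
    (hA : ∀ i j x, x ∈ A i → x ∈ A j → i = j)
    (hc : ∀ i, c (2*i) ≠ c (2*i+1) ∧ c (2*i) ≠ c (2*i+2) ∧ c (2*i+1) ≠ c (2*i+2))
    (hne : E.Nonempty) (h3 : ∀ e ∈ E, e.card = 3) (hW : ∀ e ∈ E, e ⊆ W)
    (hx : ∀ e ∈ E, ∀ j, ∃ x ∈ e, x ∈ A j) (k : ℕ)
    (hdeg : ∀ e ∈ E, ∀ v ∈ e, 2 * k * W.card < (E.filter (fun e' => v ∈ e')).card) :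
    ∀ n ≤ k, ∃ f : ℕ → V, (∀ i ≤ 2 * n, ∀ j ≤ 2 * n, f i = f j → i = j) ∧
      (∀ i ≤ 2 * n, f i ∈ A (c i)) ∧
      (∀ i < n, ({f (2 * i), f (2 * i + 1), f (2 * i + 2)} : Finset V) ∈ E) ∧
      ∃ e ∈ E, f (2 * n) ∈ e := by
  intro n
  induction n with
  | zero =>
    intro _
    obtain ⟨e, he⟩ := hne
    obtain ⟨x, hxe, hxA⟩ := hx e he (c 0)
    refine ⟨fun _ => x, ?_, ?_, ?_, e, he, hxe⟩
    · intro i hi j hj _; omega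
    · intro i hi
      have : i = 0 := by omega
      subst this; exact hxA
    · intro i hi; omega
  | succ n ih =>
    intro hn
    obtain ⟨f, finj, fA, fE, e0, he0, hv0⟩ := ih (by omega)
    set v := f (2 * n) with hv
    have hd := hdeg e0 he0 v hv0
    set U := (range (2 * n)).image f with hU
    have hUc : U.card ≤ 2 * n := card_image_le.trans (by simp)
    -- bad edges
    have : ∃ e ∈ E, v ∈ e ∧ ∀ u ∈ U, u ∉ e := by
      by_contra hcon
      push Not at hcon
      have hsub : E.filter (fun e' => v ∈ e') ⊆
          (U ×ˢ W).image (fun p => ({v, p.1, p.2} : Finset V)) := by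
        intro e he
        rw [mem_filter] at he
        obtain ⟨u, huU, hue⟩ := hcon e he.1 he.2
        have huv : v ≠ u := by
          rintro h
          rw [hU, mem_image] at huU
          obtain ⟨i, hi, hiu⟩ := huU
          rw [mem_range] at hi
          have := finj i (by omega) (2 * n) le_rfl (by rw [hiu, ← h])
          omega
        have : ((e.erase v).erase u).Nonempty := by
          apply card_pos.mp
          rw [card_erase_of_mem (by simp [hue, huv.symm]), card_erase_of_mem he.2, h3 e he.1]
          norm_num
        obtain ⟨w, hw⟩ := this
        simp only [mem_erase] at hw
        rw [mem_image]
        refine ⟨(u, w), ?_, ?_⟩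
        · rw [mem_product]; exact ⟨huU, hW e he.1 hw.2.2⟩
        · exact aux_three (h3 e he.1) he.2 hue hw.2.2 huv (Ne.symm hw.2.1) (Ne.symm hw.1)
      have h1 := card_le_card hsub
      have h2 : ((U ×ˢ W).image (fun p => ({v, p.1, p.2} : Finset V))).card ≤ U.card * W.card :=
        card_image_le.trans (by rw [card_product])
      have h4 : U.card * W.card ≤ 2 * k * W.card := Nat.mul_le_mul_right _ (by omega)
      omega
    obtain ⟨e, he, hve, hUe⟩ := this
    obtain ⟨x, hxe, hxA⟩ := hx e he (c (2 * n + 1))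
    obtain ⟨y, hye, hyA⟩ := hx e he (c (2 * n + 2))
    have hvA := fA (2 * n) le_rfl
    rw [← hv] at hvA
    obtain ⟨c1, c2, c3⟩ := hc n
    have hvx : v ≠ x := fun h => c1 (hA _ _ x (h ▸ hvA) hxA)
    have hvy : v ≠ y := fun h => c2 (hA _ _ y (h ▸ hvA) hyA)
    have hxy : x ≠ y := fun h => c3 (hA _ _ y (h ▸ hxA) hyA)
    have hfx : ∀ i ≤ 2 * n, f i ≠ x := by
      intro i hi h
      rcases Nat.lt_or_ge i (2 * n) with h' | h'
      · exact hUe (f i) (mem_image_of_mem _ (mem_range.mpr h')) (h ▸ hxe)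
      · have : i = 2 * n := by omega
        subst this; exact hvx h
    have hfy : ∀ i ≤ 2 * n, f i ≠ y := by
      intro i hi h
      rcases Nat.lt_or_ge i (2 * n) with h' | h'
      · exact hUe (f i) (mem_image_of_mem _ (mem_range.mpr h')) (h ▸ hye)
      · have : i = 2 * n := by omega
        subst this; exact hvy h
    set g : ℕ → V := fun i => if i ≤ 2 * n then f i else if i = 2 * n + 1 then x else y with hg
    have g0 : ∀ i ≤ 2 * n, g i = f i := fun i hi => by simp [hg, hi]
    have g1 : g (2 * n + 1) = x := by simp [hg]
    have g2 : g (2 * n + 2) = y := by simp [hg]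
    have hcase : ∀ i ≤ 2 * (n + 1), i ≤ 2 * n ∨ i = 2 * n + 1 ∨ i = 2 * n + 2 := by
      intro i hi; omega
    refine ⟨g, ?_, ?_, ?_, e, he, ?_⟩
    · intro i hi j hj hij
      rcases hcase i hi with h | h | h <;> rcases hcase j hj with h' | h' | h'
      · rw [g0 i h, g0 j h'] at hij; exact finj i h j h' hij
      · rw [g0 i h, h', g1] at hij; exact absurd hij (hfx i h)
      · rw [g0 i h, h', g2] at hij; exact absurd hij (hfy i h)
      · rw [g0 j h', h, g1] at hij; exact absurd hij.symm (hfx j h')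
      · omega
      · rw [h, h', g1, g2] at hij; exact absurd hij hxy
      · rw [g0 j h', h, g2] at hij; exact absurd hij.symm (hfy j h')
      · rw [h, h', g1, g2] at hij; exact absurd hij.symm hxy
      · omega
    · intro i hi
      rcases hcase i hi with h | h | h
      · rw [g0 i h]; exact fA i h
      · rw [h, g1]; exact hxA
      · rw [h, g2]; exact hyA
    · intro i hi
      rcases Nat.lt_or_ge i n with h | h
      · rw [g0 _ (by omega), g0 _ (by omega), g0 _ (by omega)]; exact fE i h
      · have : i = n := by omega
        subst this
        rw [g0 _ le_rfl, g1, g2, ← hv, aux_three (h3 e he) hve hxe hye hvx hvy hxy]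
        exact he
    · have : 2 * (n + 1) = 2 * n + 2 := by ring
      rw [this, g2]; exact hye

def auxC (i : ℕ) : Fin 3 :=
  if i % 8 = 0 ∨ i % 8 = 4 then 2 else if i % 8 = 1 ∨ i % 8 = 3 ∨ i % 8 = 6 then 1 else 0

lemma auxC_ne (i : ℕ) : auxC (2*i) ≠ auxC (2*i+1) ∧ auxC (2*i) ≠ auxC (2*i+2) ∧
    auxC (2*i+1) ≠ auxC (2*i+2) := by
  have h : i % 4 = 0 ∨ i % 4 = 1 ∨ i % 4 = 2 ∨ i % 4 = 3 := by omega
  have key : ∀ a b, a % 8 = b % 8 → auxC a = auxC b := by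
    intro a b h; simp only [auxC, h]
  rcases h with h | h | h | h
  · rw [key (2*i) 0 (by omega), key (2*i+1) 1 (by omega), key (2*i+2) 2 (by omega)]; decide
  · rw [key (2*i) 2 (by omega), key (2*i+1) 3 (by omega), key (2*i+2) 4 (by omega)]; decide
  · rw [key (2*i) 4 (by omega), key (2*i+1) 5 (by omega), key (2*i+2) 6 (by omega)]; decide
  · rw [key (2*i) 6 (by omega), key (2*i+1) 7 (by omega), key (2*i+2) 0 (by omega)]; decide

lemma auxC_count (s : ℕ) : Nat.count (fun i => auxC i = 0) (8*s+1) = 3*s ∧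
    Nat.count (fun i => auxC i = 1) (8*s+1) = 3*s ∧
    Nat.count (fun i => auxC i = 2) (8*s+1) = 2*s+1 := by
  have key : ∀ a b, a % 8 = b % 8 → auxC a = auxC b := by
    intro a b h; simp only [auxC, h]
  induction s with
  | zero => decide
  | succ s ih =>
    have e : 8 * (s+1) + 1 = 8*s+1+1+1+1+1+1+1+1+1 := by ring
    rw [e]
    simp only [Nat.count_succ _ (8*s+1+1+1+1+1+1+1+1), Nat.count_succ _ (8*s+1+1+1+1+1+1+1),
      Nat.count_succ _ (8*s+1+1+1+1+1+1), Nat.count_succ _ (8*s+1+1+1+1+1),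
      Nat.count_succ _ (8*s+1+1+1+1), Nat.count_succ _ (8*s+1+1+1), Nat.count_succ _ (8*s+1+1),
      Nat.count_succ _ (8*s+1)]
    rw [key (8*s+1+1+1+1+1+1+1+1) 0 (by omega), key (8*s+1+1+1+1+1+1+1) 7 (by omega),
      key (8*s+1+1+1+1+1+1) 6 (by omega), key (8*s+1+1+1+1+1) 5 (by omega),
      key (8*s+1+1+1+1) 4 (by omega), key (8*s+1+1+1) 3 (by omega),
      key (8*s+1+1) 2 (by omega), key (8*s+1) 1 (by omega)]
    obtain ⟨h0, h1, h2⟩ := ih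
    rw [h0, h1, h2]
    have r0 : auxC 0 = 2 := by decide
    have r1 : auxC 1 = 1 := by decide
    have r2 : auxC 2 = 0 := by decide
    have r3 : auxC 3 = 1 := by decide
    have r4 : auxC 4 = 2 := by decide
    have r5 : auxC 5 = 0 := by decide
    have r6 : auxC 6 = 1 := by decide
    have r7 : auxC 7 = 0 := by decide
    simp [r0, r1, r2, r3, r4, r5, r6, r7]
    omega

lemma aux_cross {V : Type} [DecidableEq V] {A1 A2 A3 : Finset V} (h12 : Disjoint A1 A2)
    (h13 : Disjoint A1 A3) (h23 : Disjoint A2 A3) (e : Finset V) :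
    (e ∩ (A1 ∪ A2 ∪ A3)).card = (e ∩ A1).card + (e ∩ A2).card + (e ∩ A3).card := by
  rw [inter_union_distrib_left, inter_union_distrib_left, card_union_of_disjoint,
    card_union_of_disjoint]
  · exact h12.mono inter_subset_right inter_subset_right
  · rw [disjoint_union_left]
    exact ⟨h13.mono inter_subset_right inter_subset_right,
      h23.mono inter_subset_right inter_subset_right⟩

lemma aux_path {V : Type} [DecidableEq V] (H : Finset (Finset V)) (h3 : ∀ e ∈ H, e.card = 3)
    (V1 V2 V3 A1 A2 A3 : Finset V) (h12 : Disjoint V1 V2) (h13 : Disjoint V1 V3)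
    (h23 : Disjoint V2 V3) (hA1 : A1 ⊆ V1) (hA2 : A2 ⊆ V2) (hA3 : A3 ⊆ V3) (s m : ℕ)
    (hs : 1 ≤ s)
    (hm : (A1 ∪ A2 ∪ A3).card ≤ 8 * m)
    (hE : 512 * s * m ^ 2 < eCross H A1 A2 A3) :
    ∃ f : ℕ → V, IsLoosePath H (4 * s) f ∧
      (∀ l < 4 * s,
        (({f (2 * l), f (2 * l + 1), f (2 * l + 2)} : Finset V) ∩ V1).card = 1 ∧
        (({f (2 * l), f (2 * l + 1), f (2 * l + 2)} : Finset V) ∩ V2).card = 1 ∧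
        (({f (2 * l), f (2 * l + 1), f (2 * l + 2)} : Finset V) ∩ V3).card = 1) ∧
      pathVerts (4 * s) f ⊆ A1 ∪ A2 ∪ A3 ∧
      (pathVerts (4 * s) f).card = 8 * s + 1 ∧
      (pathVerts (4 * s) f ∩ V1).card ≤ 3 * s ∧
      (pathVerts (4 * s) f ∩ V2).card ≤ 3 * s ∧
      (pathVerts (4 * s) f ∩ V3).card ≤ 2 * s + 1 := by
  have a12 : Disjoint A1 A2 := h12.mono hA1 hA2
  have a13 : Disjoint A1 A3 := h13.mono hA1 hA3
  have a23 : Disjoint A2 A3 := h23.mono hA2 hA3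
  unfold eCross at hE
  set E := H.filter (fun e => (e ∩ A1).card = 1 ∧ (e ∩ A2).card = 1 ∧ (e ∩ A3).card = 1) with hEd
  set W := A1 ∪ A2 ∪ A3 with hWd
  have hEW : ∀ e ∈ E, e ⊆ W := by
    intro e he
    rw [hEd, mem_filter] at he
    have h := aux_cross a12 a13 a23 e
    rw [he.2.1, he.2.2.1, he.2.2.2] at h
    have : e ∩ W = e := eq_of_subset_of_card_le inter_subset_left (by rw [h3 e he.1, h])
    exact inter_eq_left.mp this
  obtain ⟨E', hE'E, hne, hdeg⟩ := aux_core (2 * (4 * s) * W.card) W.card W E rfl hEW (by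
    calc 2 * (4 * s) * W.card * W.card ≤ 2 * (4 * s) * (8 * m) * (8 * m) := by gcongr
      _ = 512 * s * m ^ 2 := by ring
      _ < _ := hE)
  let A : Fin 3 → Finset V := ![A1, A2, A3]
  have hAd : ∀ i j x, x ∈ A i → x ∈ A j → i = j := by
    intro i j x hi hj
    rw [disjoint_left] at a12 a13 a23
    fin_cases i <;> fin_cases j <;> simp [A] at hi hj ⊢
    · exact a12 hi hj
    · exact a13 hi hj
    · exact a12 hj hi
    · exact a23 hi hj
    · exact a13 hj hi
    · exact a23 hj hi
  obtain ⟨f, finj, fA, fE, -⟩ := aux_greedy W E' A auxC hAd auxC_ne hne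
    (fun e he => h3 e (mem_filter.mp (hE'E he)).1) (fun e he => hEW e (hE'E he))
    (by
      intro e he j
      have := (mem_filter.mp (hE'E he)).2
      have hh : (e ∩ A j).card = 1 := by
        fin_cases j
        · exact this.1
        · exact this.2.1
        · exact this.2.2
      obtain ⟨x, hx⟩ := card_pos.mp (by omega : 0 < (e ∩ A j).card)
      rw [mem_inter] at hx
      exact ⟨x, hx.1, hx.2⟩)
    (4 * s) hdeg (4 * s) le_rfl
  have hk : 2 * (4 * s) + 1 = 8 * s + 1 := by ring
  have hcnt : ∀ (j : Fin 3) (X : Finset V), (∀ i x, x ∈ A i → x ∈ X → i = j) →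
      (pathVerts (4 * s) f ∩ X).card ≤ Nat.count (fun i => auxC i = j) (8 * s + 1) := by
    intro j X hX
    rw [Nat.count_eq_card_filter_range]
    refine le_trans (card_le_card ?_) (card_image_le (f := f))
    intro x hx
    rw [mem_inter, pathVerts, mem_image] at hx
    obtain ⟨⟨i, hi, rfl⟩, hx⟩ := hx
    rw [hk] at hi
    rw [mem_range] at hi
    refine mem_image_of_mem _ (mem_filter.mpr ⟨mem_range.mpr hi, ?_⟩)
    exact hX _ _ (fA i (by omega)) hx
  obtain ⟨c0, c1, c2⟩ := auxC_count s
  rw [disjoint_left] at h12 h13 h23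
  refine ⟨f, ⟨by omega, finj, fun i hi => (mem_filter.mp (hE'E (fE i hi))).1⟩, ?_, ?_, ?_, ?_, ?_, ?_⟩
  · intro l hl
    have he := hE'E (fE l hl)
    set e : Finset V := {f (2 * l), f (2 * l + 1), f (2 * l + 2)}
    have hc := (mem_filter.mp he).2
    have hc3 := h3 e (mem_filter.mp he).1
    have h := aux_cross (disjoint_left.mpr h12) (disjoint_left.mpr h13) (disjoint_left.mpr h23) e
    have h' : (e ∩ (V1 ∪ V2 ∪ V3)).card ≤ e.card := card_le_card inter_subset_left
    have i1 : (e ∩ A1).card ≤ (e ∩ V1).card := card_le_card (inter_subset_inter_left hA1)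
    have i2 : (e ∩ A2).card ≤ (e ∩ V2).card := card_le_card (inter_subset_inter_left hA2)
    have i3 : (e ∩ A3).card ≤ (e ∩ V3).card := card_le_card (inter_subset_inter_left hA3)
    omega
  · intro x hx
    rw [pathVerts, mem_image] at hx
    obtain ⟨i, hi, rfl⟩ := hx
    rw [mem_range] at hi
    have hf := fA i (by omega)
    generalize auxC i = j at hf
    simp only [hWd, mem_union]
    fin_cases j
    · exact Or.inl (Or.inl hf)
    · exact Or.inl (Or.inr hf)
    · exact Or.inr hf
  · rw [pathVerts, card_image_of_injOn, card_range, hk]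
    intro i hi j hj hij
    simp at hi hj
    exact finj i (by omega) j (by omega) hij
  · rw [← c0]
    refine hcnt 0 V1 ?_
    intro i x hx hx'
    fin_cases i
    · rfl
    · exact absurd (hA2 hx) (h12 hx')
    · exact absurd (hA3 hx) (h13 hx')
  · rw [← c1]
    refine hcnt 1 V2 ?_
    intro i x hx hx'
    fin_cases i
    · exact absurd hx' (h12 (hA1 hx))
    · rfl
    · exact absurd (hA3 hx) (h23 hx')
  · rw [← c2]
    refine hcnt 2 V3 ?_
    intro i x hx hx'
    fin_cases i
    · exact absurd hx' (h13 (hA1 hx))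
    · exact absurd hx' (h23 (hA2 hx))
    · rfl

set_option maxHeartbeats 2000000 in
theorem path_tiling_of_regular_triple (d β : ℝ) (hd : 0 < d) (hβ : 0 < β) :
    ∃ ε : ℝ, 0 < ε ∧ ∃ p m₀ : ℕ, ∀ m : ℕ, m₀ < m →
      ∀ (V : Type) [Fintype V] [DecidableEq V], ∀ H : Finset (Finset V),
      (∀ e ∈ H, e.card = 3) →
      ∀ V1 V2 V3 : Finset V,
        Disjoint V1 V2 → Disjoint V1 V3 → Disjoint V2 V3 →
        V1.card = 3 * m → V2.card = 3 * m → V3.card = 2 * m →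
        RegTriple H ε d V1 V2 V3 →
        ∃ (q : ℕ) (ks : Fin q → ℕ) (fs : Fin q → ℕ → V),
          q ≤ p ∧
          (∀ i, IsLoosePath H (ks i) (fs i)) ∧
          (∀ i j, i ≠ j →
            Disjoint (pathVerts (ks i) (fs i)) (pathVerts (ks j) (fs j))) ∧
          (∀ i, ∀ l < ks i,
            (({fs i (2 * l), fs i (2 * l + 1), fs i (2 * l + 2)} : Finset V) ∩ V1).card = 1 ∧
            (({fs i (2 * l), fs i (2 * l + 1), fs i (2 * l + 2)} : Finset V) ∩ V2).card = 1 ∧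
            (({fs i (2 * l), fs i (2 * l + 1), fs i (2 * l + 2)} : Finset V) ∩ V3).card = 1) ∧
          ((((V1 ∪ V2 ∪ V3) \
              Finset.univ.biUnion fun i => pathVerts (ks i) (fs i)).card : ℝ)
            ≤ β * m) := by
  set γ : ℝ := min (β / 8) (1 / 2) with hγd
  have hγ0 : 0 < γ := by positivity
  have hγβ : γ ≤ β / 8 := min_le_left _ _
  have hγ1 : γ ≤ 1 / 2 := min_le_right _ _
  set ε : ℝ := min (d / 2) (γ / 2) with hεd
  have hε0 : 0 < ε := by positivity
  have hεd2 : ε ≤ d / 2 := min_le_left _ _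
  have hεγ : ε ≤ γ / 2 := min_le_right _ _
  set c : ℝ := d * ε ^ 3 / 64 with hcd
  have hc0 : 0 < c := by positivity
  obtain ⟨p, hp⟩ := exists_nat_ge (2 / c + 1)
  obtain ⟨m₀, hm₀⟩ := exists_nat_ge (2 / c + p / γ)
  refine ⟨ε, hε0, p, m₀, ?_⟩
  intro m hm V _ _ H h3 V1 V2 V3 h12 h13 h23 hV1 hV2 hV3 hreg
  have hmR : (2 / c + p / γ : ℝ) ≤ m := hm₀.trans (by exact_mod_cast hm.le)
  have hpγ0 : (0:ℝ) ≤ p / γ := by positivity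
  have h2c0 : (0:ℝ) < 2 / c := by positivity
  have hm0 : (0:ℝ) < m := by linarith
  have hcm : 2 ≤ c * m := by
    have : 2 / c ≤ (m:ℝ) := by linarith
    rw [div_le_iff₀ hc0] at this
    linarith
  have hpm : (p:ℝ) ≤ γ * m := by
    have : p / γ ≤ (m:ℝ) := by linarith
    rw [div_le_iff₀ hγ0] at this
    linarith
  set s : ℕ := ⌊c * m⌋₊ with hsd
  have hs1 : (s:ℝ) ≤ c * m := Nat.floor_le (by positivity)
  have hs2 : c * m < s + 1 := Nat.lt_floor_add_one _
  have hs3 : c * m / 2 ≤ s := by linarith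
  have hs4 : (1:ℝ) ≤ s := by linarith
  have hs5 : 1 ≤ s := by exact_mod_cast hs4
  set R : ℕ := ⌈(1 - γ) * m / s⌉₊ with hRd
  have hspos : (0:ℝ) < s := by linarith
  have hR0 : 0 ≤ (1 - γ) * m / s := by
    apply div_nonneg _ hspos.le
    apply mul_nonneg _ hm0.le
    linarith
  have hRp : R ≤ p := by
    have h1 : (R:ℝ) < (1 - γ) * m / s + 1 := Nat.ceil_lt_add_one hR0
    have h2 : (1 - γ) * m / s ≤ 2 / c := by
      rw [div_le_div_iff₀ hspos hc0]
      nlinarith [mul_pos hγ0 (mul_pos hm0 hc0)]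
    have : (R:ℝ) < p := by linarith
    exact_mod_cast this.le
  have hRs : (1 - γ) * m ≤ R * s := by
    have := Nat.le_ceil ((1 - γ) * m / s)
    rwa [div_le_iff₀ hspos] at this
  have hrR : ∀ r < R, (r:ℝ) * s < (1 - γ) * m := by
    intro r hr
    rw [hRd, Nat.lt_ceil, lt_div_iff₀ hspos] at hr
    exact hr
  have main : ∀ r ≤ R, ∃ fs : ℕ → ℕ → V,
      (∀ i < r, IsLoosePath H (4 * s) (fs i)) ∧
      (∀ i < r, ∀ j < r, i ≠ j →
        Disjoint (pathVerts (4 * s) (fs i)) (pathVerts (4 * s) (fs j))) ∧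
      (∀ i < r, ∀ l < 4 * s,
        (({fs i (2 * l), fs i (2 * l + 1), fs i (2 * l + 2)} : Finset V) ∩ V1).card = 1 ∧
        (({fs i (2 * l), fs i (2 * l + 1), fs i (2 * l + 2)} : Finset V) ∩ V2).card = 1 ∧
        (({fs i (2 * l), fs i (2 * l + 1), fs i (2 * l + 2)} : Finset V) ∩ V3).card = 1) ∧
      ∃ U : Finset V, U = (range r).biUnion (fun i => pathVerts (4 * s) (fs i)) ∧
        U ⊆ V1 ∪ V2 ∪ V3 ∧ U.card = r * (8 * s + 1) ∧
        (U ∩ V1).card ≤ r * (3 * s) ∧ (U ∩ V2).card ≤ r * (3 * s) ∧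
        (U ∩ V3).card ≤ r * (2 * s + 1) := by
    intro r
    induction r with
    | zero =>
      intro _
      have hne : V1.Nonempty := by
        apply card_pos.mp
        have : 0 < m := by exact_mod_cast hm0
        omega
      obtain ⟨x, -⟩ := hne
      refine ⟨fun _ _ => x, by simp, by simp, by simp, ∅, by simp, by simp, by simp⟩
    | succ r ih =>
      intro hr
      obtain ⟨fs, p1, p2, p3, U, hU, hUV, hUc, hU1, hU2, hU3⟩ := ih (by omega)
      have hrs := hrR r (by omega)
      have hrp : (r:ℝ) ≤ p := by
        have : r ≤ p := by omega
        exact_mod_cast this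
      have k1 := card_sdiff_add_card_inter V1 U
      have k2 := card_sdiff_add_card_inter V2 U
      have k3 := card_sdiff_add_card_inter V3 U
      rw [inter_comm] at k1 k2 k3
      have l1 : 3 * m ≤ (V1 \ U).card + r * (3 * s) := by omega
      have l2 : 3 * m ≤ (V2 \ U).card + r * (3 * s) := by omega
      have l3 : 2 * m ≤ (V3 \ U).card + r * (2 * s + 1) := by omega
      have l1' : (3 * m : ℝ) ≤ (V1 \ U).card + r * (3 * s) := by exact_mod_cast l1
      have l2' : (3 * m : ℝ) ≤ (V2 \ U).card + r * (3 * s) := by exact_mod_cast l2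
      have l3' : (2 * m : ℝ) ≤ (V3 \ U).card + r * (2 * s + 1) := by exact_mod_cast l3
      have hεm : ε * m ≤ γ / 2 * m := by gcongr
      have q1 : ε * (3 * m) ≤ (V1 \ U).card := by nlinarith
      have q2 : ε * (3 * m) ≤ (V2 \ U).card := by nlinarith
      have q3 : ε * (2 * m) ≤ (V3 \ U).card := by nlinarith
      have hr := hreg (V1 \ U) (V2 \ U) (V3 \ U) sdiff_subset sdiff_subset sdiff_subset
        (by rw [hV1]; push_cast; exact q1) (by rw [hV2]; push_cast; exact q2)
        (by rw [hV3]; push_cast; exact q3)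
      have hden : d / 2 ≤ triDensity H (V1 \ U) (V2 \ U) (V3 \ U) := by
        have := (abs_le.mp hr).1
        linarith
      have hprod : ε * (3 * m) * (ε * (3 * m)) * (ε * (2 * m)) ≤
          ((V1 \ U).card : ℝ) * (V2 \ U).card * (V3 \ U).card := by gcongr
      have hεm0 : 0 < ε * m := by positivity
      have hprod0 : 0 < ε * (3 * m) * (ε * (3 * m)) * (ε * (2 * m)) := by positivity
      unfold triDensity at hden
      rw [le_div_iff₀ (by linarith)] at hden
      have hE : 512 * s * m ^ 2 < eCross H (V1 \ U) (V2 \ U) (V3 \ U) := by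
        have e1 : d / 2 * (ε * (3 * m) * (ε * (3 * m)) * (ε * (2 * m))) ≤
            (eCross H (V1 \ U) (V2 \ U) (V3 \ U) : ℝ) :=
          (mul_le_mul_of_nonneg_left hprod (by positivity)).trans hden
        have e2 : (512 * s * m ^ 2 : ℝ) ≤ 512 * (c * m) * m ^ 2 := by gcongr
        have e3 : 0 < d * ε ^ 3 * m ^ 3 := by positivity
        have e4 : 512 * (c * m) * m ^ 2 = 8 * (d * ε ^ 3 * m ^ 3) := by rw [hcd]; ring
        have e5 : d / 2 * (ε * (3 * m) * (ε * (3 * m)) * (ε * (2 * m))) =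
          9 * (d * ε ^ 3 * m ^ 3) := by ring
        have : (512 * s * m ^ 2 : ℝ) < (eCross H (V1 \ U) (V2 \ U) (V3 \ U) : ℝ) := by linarith
        exact_mod_cast this
      have hm8 : (V1 \ U ∪ V2 \ U ∪ V3 \ U).card ≤ 8 * m := by
        have u1 := card_union_le (V1 \ U ∪ V2 \ U) (V3 \ U)
        have u2 := card_union_le (V1 \ U) (V2 \ U)
        omega
      obtain ⟨f, f1, f2, f3, f4, f5, f6, f7⟩ := aux_path H h3 V1 V2 V3 (V1 \ U) (V2 \ U) (V3 \ U)
        h12 h13 h23 sdiff_subset sdiff_subset sdiff_subset s m hs5 hm8 hE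
      have hfU : Disjoint (pathVerts (4 * s) f) U := by
        rw [disjoint_left]
        intro x hx hxU
        have := f3 hx
        simp [hxU] at this
      have hfi : ∀ i < r, Disjoint (pathVerts (4 * s) f) (pathVerts (4 * s) (fs i)) := by
        intro i hi
        refine hfU.mono_right ?_
        rw [hU]
        exact subset_biUnion_of_mem (fun i => pathVerts (4 * s) (fs i)) (mem_range.mpr hi)
      set g : ℕ → ℕ → V := fun i => if i = r then f else fs i with hg
      have gr : g r = f := by simp [hg]
      have gi : ∀ i < r, g i = fs i := by
        intro i hi
        have : i ≠ r := by omega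
        simp [hg, this]
      have hcase : ∀ i < r + 1, i < r ∨ i = r := fun i hi => by omega
      have hi3 : ∀ X : Finset V, ((pathVerts (4 * s) f ∪ U) ∩ X).card ≤
          (pathVerts (4 * s) f ∩ X).card + (U ∩ X).card := by
        intro X
        rw [union_inter_distrib_right]
        exact card_union_le _ _
      refine ⟨g, ?_, ?_, ?_, pathVerts (4 * s) f ∪ U, ?_, ?_, ?_, ?_, ?_, ?_⟩
      · intro i hi
        rcases hcase i hi with h | rfl
        · rw [gi i h]; exact p1 i h
        · rw [gr]; exact f1
      · intro i hi j hj hij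
        rcases hcase i hi with h | h <;> rcases hcase j hj with h' | h'
        · rw [gi i h, gi j h']; exact p2 i h j h' hij
        · rw [gi i h, h', gr]; exact (hfi i h).symm
        · rw [gi j h', h, gr]; exact hfi j h'
        · omega
      · intro i hi
        rcases hcase i hi with h | rfl
        · rw [gi i h]; exact p3 i h
        · rw [gr]; exact f2
      · rw [range_add_one, biUnion_insert, gr, hU]
        congr 1
        apply biUnion_congr rfl
        intro i hi
        rw [gi i (mem_range.mp hi)]
      · apply union_subset _ hUV
        exact f3.trans (union_subset_union (union_subset_union sdiff_subset sdiff_subset)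
          sdiff_subset)
      · rw [card_union_of_disjoint hfU, f4, hUc]; ring
      · have := hi3 V1
        rw [Nat.succ_mul r]; omega
      · have := hi3 V2
        rw [Nat.succ_mul r]; omega
      · have := hi3 V3
        rw [Nat.succ_mul r]; omega
  obtain ⟨fs, p1, p2, p3, U, hU, hUV, hUc, -⟩ := main R le_rfl
  refine ⟨R, fun _ => 4 * s, fun i => fs i, hRp, fun i => p1 i i.2,
    fun i j hij => p2 i i.2 j j.2 (fun h => hij (Fin.ext h)), fun i => p3 i i.2, ?_⟩
  have hUU : (Finset.univ.biUnion fun i : Fin R => pathVerts (4 * s) (fs i)) = U := by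
    rw [hU]
    ext x
    simp only [mem_biUnion, mem_univ, true_and, mem_range]
    constructor
    · rintro ⟨i, hi⟩; exact ⟨i, i.2, hi⟩
    · rintro ⟨i, hi, h⟩; exact ⟨⟨i, hi⟩, h⟩
  rw [hUU]
  have k := card_sdiff_add_card_eq_card hUV
  have u1 := card_union_le (V1 ∪ V2) V3
  have u2 := card_union_le V1 V2
  have k2 : ((V1 ∪ V2 ∪ V3) \ U).card + R * (8 * s + 1) ≤ 8 * m := by omega
  have k3 : (((V1 ∪ V2 ∪ V3) \ U).card : ℝ) + R * (8 * s + 1) ≤ 8 * m := by exact_mod_cast k2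
  have hR00 : (0:ℝ) ≤ R := by positivity
  nlinarith
end
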